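/- Under the 2-group SBM with observation errors, suppose q ∈ (0,1), β ∈ (0,1), and restrict to the event Y ≠ Y*. Then there exists a strictly positive definite 3×3 covariance matrix Σ_β such that the vector (n(β̂_b − β), √n(γ̂_1 − γ_1), √n(γ̂_2 − γ_2)) converges in distribution to the centered 3-dimensional Gaussian N(0, Σ_β) as n → ∞. -/

import Mathlib

/-!
STATEMENT 13: Under the 2-group SBM with observation errors, restricted to the
event Y ≠ Y* (formalized via the conditional probability measure given that
event), there is a strictly positive definite 3×3 covariance Σ_β such that
(n(β̂_b − β), √n(γ̂₁ − γ₁), √n(γ̂₂ − γ₂)) converges in distribution to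
N(0, Σ_β).  Convergence in distribution to the multivariate Gaussian is
expressed by the Cramér–Wold device.  The model hypothesis holds for all
large n.
-/

open MeasureTheory ProbabilityTheory Filter Finset

noncomputable section

/-- Mass of a label configuration: i.i.d. labels, `true` (minority) w.p. κ. -/
def labelMass (κ : ℝ) {n : ℕ} (l : Fin n → Bool) : ℝ :=
  ∏ i, (if l i then κ else 1 - κ)

/-- Conditional mass of an adjacency configuration given labels:
independent Bernoulli edges with success probability `B (l i) (l j)`, i < j. -/
def edgeMass {n : ℕ} (B : Bool → Bool → ℝ) (l : Fin n → Bool)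
    (a : Fin n → Fin n → Bool) : ℝ :=
  ∏ p ∈ Finset.univ.filter (fun p : Fin n × Fin n => p.1 < p.2),
    (if a p.1 p.2 then B (l p.1) (l p.2) else 1 - B (l p.1) (l p.2))

/-- Conditional mass of an observed network `y` given the construct network
`a` and the labels: each present edge of `a` is kept independently with
probability `1 − βm (l i) (l j)` (type II error rate `βm`), and no edges are
added. -/
def obsMass {n : ℕ} (βm : Bool → Bool → ℝ) (l : Fin n → Bool)
    (a y : Fin n → Fin n → Bool) : ℝ :=
  ∏ p ∈ Finset.univ.filter (fun p : Fin n × Fin n => p.1 < p.2),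
    (if a p.1 p.2 then
      (if y p.1 p.2 then 1 - βm (l p.1) (l p.2) else βm (l p.1) (l p.2))
     else (if y p.1 p.2 then 0 else 1))

/-- The symmetric 2×2 matrix with within-group values `x₁` (group 1 = `true`),
`x₂` (group 2 = `false`) and between-group value `xb`. -/
def sbmB (x₁ x₂ xb : ℝ) : Bool → Bool → ℝ :=
  fun x y => if x then (if y then x₁ else xb) else (if y then xb else x₂)

/-- `(P, c, A, Y, Y')` is a 2-group SBM with connectivity matrix `B` and two
conditionally independent noisy replicates `Y`, `Y'` with group-dependent
type II error rates `βm`.  The joint law is specified by its probability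
mass function. -/
structure IsObsSBM {Ω : Type*} [MeasurableSpace Ω] (P : Measure Ω) (n : ℕ)
    (B βm : Bool → Bool → ℝ) (κ : ℝ)
    (c : Ω → Fin n → Bool) (A Y Y' : Ω → Fin n → Fin n → Bool) : Prop where
  isProb : IsProbabilityMeasure P
  symmA : ∀ ω i j, A ω i j = A ω j i
  looplessA : ∀ ω i, A ω i i = false
  symmY : ∀ ω i j, Y ω i j = Y ω j i
  looplessY : ∀ ω i, Y ω i i = false
  symmY' : ∀ ω i j, Y' ω i j = Y' ω j i
  looplessY' : ∀ ω i, Y' ω i i = false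
  law : ∀ (l : Fin n → Bool) (a y y' : Fin n → Fin n → Bool),
    (∀ i j, a i j = a j i) → (∀ i, a i i = false) →
    (∀ i j, y i j = y j i) → (∀ i, y i i = false) →
    (∀ i j, y' i j = y' j i) → (∀ i, y' i i = false) →
    P {ω | c ω = l ∧ A ω = a ∧ Y ω = y ∧ Y' ω = y'}
      = ENNReal.ofReal (labelMass κ l * edgeMass B l a *
          obsMass βm l a y * obsMass βm l a y')

/-- Number of unordered pairs `i < j` selected by `sel`. -/
def pairCard {n : ℕ} (sel : Fin n → Fin n → Bool) : ℝ :=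
  ((Finset.univ.filter
      (fun p : Fin n × Fin n => p.1 < p.2 ∧ sel p.1 p.2 = true)).card : ℝ)

/-- Pairs within group 1. -/
def within1 {n : ℕ} (c : Fin n → Bool) : Fin n → Fin n → Bool :=
  fun i j => c i && c j

/-- Pairs within group 2. -/
def within2 {n : ℕ} (c : Fin n → Bool) : Fin n → Fin n → Bool :=
  fun i j => !(c i) && !(c j)

/-- Between-group pairs. -/
def between {n : ℕ} (c : Fin n → Bool) : Fin n → Fin n → Bool :=
  fun i j => c i != c j

/-- `û₁`: observed edge density over the pairs selected by `cls`. -/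
def u1hat {n : ℕ} (cls y : Fin n → Fin n → Bool) : ℝ :=
  pairCard (fun i j => cls i j && y i j) / pairCard cls

/-- `û₂`: half the disagreement rate of the two replicates over the pairs
selected by `cls`. -/
def u2hat {n : ℕ} (cls y y' : Fin n → Fin n → Bool) : ℝ :=
  pairCard (fun i j => cls i j && (y i j != y' i j)) / (2 * pairCard cls)

/-- Estimator of the type II error rate over the pairs selected by `cls`. -/
def betaHat {n : ℕ} (cls y y' : Fin n → Fin n → Bool) : ℝ :=
  u2hat cls y y' / u1hat cls y

/-- `γ̂₁ = √n (β̂_b − β̂₁)`. -/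
def gammaHat1 {n : ℕ} (c : Fin n → Bool) (y y' : Fin n → Fin n → Bool) : ℝ :=
  Real.sqrt n * (betaHat (between c) y y' - betaHat (within1 c) y y')

/-- `γ̂₂ = √n (β̂_b − β̂₂)`. -/
def gammaHat2 {n : ℕ} (c : Fin n → Bool) (y y' : Fin n → Fin n → Bool) : ℝ :=
  Real.sqrt n * (betaHat (between c) y y' - betaHat (within2 c) y y')

/-- `μ̂₁ = √n (û₁,₁/(1−β̂₁) − û₁,b/(1−β̂_b))`. -/
def muHat1 {n : ℕ} (c : Fin n → Bool) (y y' : Fin n → Fin n → Bool) : ℝ :=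
  Real.sqrt n * (u1hat (within1 c) y / (1 - betaHat (within1 c) y y')
    - u1hat (between c) y / (1 - betaHat (between c) y y'))

/-- `μ̂₂ = √n (û₁,₂/(1−β̂₂) − û₁,b/(1−β̂_b))`. -/
def muHat2 {n : ℕ} (c : Fin n → Bool) (y y' : Fin n → Fin n → Bool) : ℝ :=
  Real.sqrt n * (u1hat (within2 c) y / (1 - betaHat (within2 c) y y')
    - u1hat (between c) y / (1 - betaHat (between c) y y'))

/-- Quadratic form of a 3×3 matrix. -/
def quadForm3 (M : Matrix (Fin 3) (Fin 3) ℝ) (t : Fin 3 → ℝ) : ℝ :=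
  ∑ k, ∑ k', t k * M k k' * t k'

/-- Unordered pairs of nodes. -/
abbrev Pr (n : ℕ) := {p : Fin n × Fin n // p.1 < p.2}

/-- Configurations. -/
abbrev Cfg (n : ℕ) := (Fin n → Bool) × (Pr n → Bool × Bool × Bool)

/-- Class of a pair of labels. -/
def cl (x y : Bool) : Fin 3 := if x then (if y then 1 else 0) else (if y then 0 else 2)

def obsw (be : ℝ) (a y : Bool) : ℝ :=
  if a then (if y then 1 - be else be) else (if y then 0 else 1)

def wt (b be : ℝ) (w : Bool × Bool × Bool) : ℝ :=
  (if w.1 then b else 1 - b) * obsw be w.1 w.2.1 * obsw be w.1 w.2.2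

def pcl {n : ℕ} (l : Fin n → Bool) (p : Pr n) : Fin 3 := cl (l p.1.1) (l p.1.2)

def mass {n : ℕ} (κ : ℝ) (b be : Fin 3 → ℝ) (e : Cfg n) : ℝ :=
  labelMass κ e.1 * ∏ p : Pr n, wt (b (pcl e.1 p)) (be (pcl e.1 p)) (e.2 p)

def nu (κ : ℝ) (b be : Fin 3 → ℝ) (n : ℕ) : Measure (Cfg n) :=
  ∑ e, ENNReal.ofReal (mass κ b be e) • Measure.dirac e

lemma wt_nonneg {b be : ℝ} (hb : b ∈ Set.Icc (0:ℝ) 1) (hbe : be ∈ Set.Icc (0:ℝ) 1)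
    (w : Bool × Bool × Bool) : 0 ≤ wt b be w := by
  obtain ⟨h1, h2⟩ := hb
  obtain ⟨h3, h4⟩ := hbe
  obtain ⟨a, y, y'⟩ := w
  have h5 : 0 ≤ 1 - b := by linarith
  have h6 : 0 ≤ 1 - be := by linarith
  cases a <;> cases y <;> cases y' <;> simp only [wt, obsw, if_true, if_false, Bool.false_eq_true] <;>
    positivity

lemma wt_sum (b be : ℝ) : ∑ w, wt b be w = 1 := by
  simp [Fintype.sum_prod_type, wt, obsw]; ring

lemma labelMass_nonneg {κ : ℝ} (h0 : 0 ≤ κ) (h1 : κ ≤ 1) {n : ℕ} (l : Fin n → Bool) :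
    0 ≤ labelMass κ l := by
  unfold labelMass
  refine prod_nonneg fun i _ => ?_
  split_ifs <;> linarith

lemma labelMass_sum (κ : ℝ) (n : ℕ) : ∑ l : Fin n → Bool, labelMass κ l = 1 := by
  unfold labelMass
  rw [← Fintype.prod_sum (fun (_ : Fin n) (x : Bool) => if x then κ else 1 - κ)]
  simp

lemma mass_nonneg {κ : ℝ} (h0 : 0 ≤ κ) (h1 : κ ≤ 1) {b be : Fin 3 → ℝ}
    (hb : ∀ k, b k ∈ Set.Icc (0:ℝ) 1) (hbe : ∀ k, be k ∈ Set.Icc (0:ℝ) 1)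
    {n : ℕ} (e : Cfg n) : 0 ≤ mass κ b be e :=
  mul_nonneg (labelMass_nonneg h0 h1 _) (prod_nonneg fun _ _ => wt_nonneg (hb _) (hbe _) _)

lemma sum_mass_mul {n : ℕ} (κ : ℝ) (b be : Fin 3 → ℝ) (g : Fin 3 → Bool × Bool × Bool → ℂ) :
    ∑ e : Cfg n, (mass κ b be e : ℂ) * ∏ p : Pr n, g (pcl e.1 p) (e.2 p)
      = ∑ l : Fin n → Bool, (labelMass κ l : ℂ) *
        ∏ p : Pr n, ∑ w, (wt (b (pcl l p)) (be (pcl l p)) w : ℂ) * g (pcl l p) w := by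
  rw [Fintype.sum_prod_type]
  refine Finset.sum_congr rfl fun l _ => ?_
  rw [Fintype.prod_sum, Finset.mul_sum]
  refine Finset.sum_congr rfl fun x _ => ?_
  simp only [mass, Finset.prod_mul_distrib]
  push_cast
  ring

lemma mass_sum {n : ℕ} (κ : ℝ) (b be : Fin 3 → ℝ) : ∑ e : Cfg n, mass κ b be e = 1 := by
  have h := sum_mass_mul (n := n) κ b be (fun _ _ => 1)
  simp only [Finset.prod_const_one, mul_one] at h
  have h2 : ∀ k, ∑ w, (wt (b k) (be k) w : ℂ) = 1 := fun k => by
    exact_mod_cast congrArg (fun x : ℝ => (x : ℂ)) (wt_sum (b k) (be k))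
  simp only [h2, Finset.prod_const_one, mul_one] at h
  have h3 := labelMass_sum κ n
  rw [← Complex.ofReal_sum, ← Complex.ofReal_sum, h3] at h
  exact Complex.ofReal_injective h

lemma nu_singleton {n : ℕ} (κ : ℝ) (b be : Fin 3 → ℝ) (e : Cfg n) :
    nu κ b be n {e} = ENNReal.ofReal (mass κ b be e) := by
  simp only [nu, Measure.coe_finsetSum, Finset.sum_apply, Measure.smul_apply, smul_eq_mul]
  rw [Finset.sum_eq_single e]
  · rw [Measure.dirac_apply' _ (measurableSet_singleton _)]
    simp
  · intro a _ ha
    rw [Measure.dirac_apply' _ (measurableSet_singleton _)]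
    simp [ha]
  · intro h
    exact absurd (Finset.mem_univ _) h

lemma nu_prob {n : ℕ} {κ : ℝ} (h0 : 0 ≤ κ) (h1 : κ ≤ 1) {b be : Fin 3 → ℝ}
    (hb : ∀ k, b k ∈ Set.Icc (0:ℝ) 1) (hbe : ∀ k, be k ∈ Set.Icc (0:ℝ) 1) :
    IsProbabilityMeasure (nu κ b be n) := by
  constructor
  simp only [nu, Measure.coe_finsetSum, Finset.sum_apply, Measure.smul_apply, smul_eq_mul,
    measure_univ, mul_one]
  rw [← ENNReal.ofReal_sum_of_nonneg (fun e _ => mass_nonneg h0 h1 hb hbe e), mass_sum]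
  simp

lemma nu_integral {n : ℕ} {κ : ℝ} (h0 : 0 ≤ κ) (h1 : κ ≤ 1) {b be : Fin 3 → ℝ}
    (hb : ∀ k, b k ∈ Set.Icc (0:ℝ) 1) (hbe : ∀ k, be k ∈ Set.Icc (0:ℝ) 1) (f : Cfg n → ℂ) :
    ∫ e, f e ∂(nu κ b be n) = ∑ e, (mass κ b be e : ℂ) * f e := by
  have := nu_prob (n := n) h0 h1 hb hbe
  rw [integral_fintype (Integrable.of_finite)]
  refine Finset.sum_congr rfl fun e _ => ?_
  rw [Measure.real, nu_singleton, ENNReal.toReal_ofReal (mass_nonneg h0 h1 hb hbe e)]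
  simp

def Phi {Ω : Type*} {n : ℕ} (c : Ω → Fin n → Bool) (A Y Y' : Ω → Fin n → Fin n → Bool)
    (ω : Ω) : Cfg n :=
  (c ω, fun p => (A ω p.1.1 p.1.2, Y ω p.1.1 p.1.2, Y' ω p.1.1 p.1.2))

def matOf {n : ℕ} (f : Pr n → Bool) (i j : Fin n) : Bool :=
  if h : i < j then f ⟨(i, j), h⟩ else if h : j < i then f ⟨(j, i), h⟩ else false

lemma matOf_symm {n : ℕ} (f : Pr n → Bool) (i j : Fin n) : matOf f i j = matOf f j i := by
  unfold matOf
  rcases lt_trichotomy i j with h | h | h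
  · simp [h, h.not_gt]
  · simp [h]
  · simp [h, h.not_gt]

lemma matOf_diag {n : ℕ} (f : Pr n → Bool) (i : Fin n) : matOf f i i = false := by
  simp [matOf]

lemma matOf_pair {n : ℕ} (f : Pr n → Bool) (p : Pr n) : matOf f p.1.1 p.1.2 = f p := by
  simp [matOf, p.2]

lemma eq_matOf_iff {n : ℕ} (m : Fin n → Fin n → Bool) (hs : ∀ i j, m i j = m j i)
    (hd : ∀ i, m i i = false) (f : Pr n → Bool) :
    m = matOf f ↔ ∀ p : Pr n, m p.1.1 p.1.2 = f p := by
  constructor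
  · rintro rfl p
    exact matOf_pair f p
  · intro h
    funext i j
    unfold matOf
    split_ifs with h1 h2
    · exact h ⟨(i, j), h1⟩
    · rw [hs]; exact h ⟨(j, i), h2⟩
    · have : i = j := le_antisymm (not_lt.1 h2) (not_lt.1 h1)
      rw [this]; exact hd j

lemma sbmB_eq (x₁ x₂ xb : ℝ) (x y : Bool) : sbmB x₁ x₂ xb x y = ![xb, x₁, x₂] (cl x y) := by
  cases x <;> cases y <;> simp [sbmB, cl]

lemma prod_pairs {n : ℕ} (f : Fin n × Fin n → ℝ) :
    ∏ p ∈ Finset.univ.filter (fun p : Fin n × Fin n => p.1 < p.2), f p = ∏ p : Pr n, f p.1 :=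
  Finset.prod_subtype _ (by simp) f

lemma sum_pairs {n : ℕ} (f : Fin n × Fin n → ℝ) :
    ∑ p ∈ Finset.univ.filter (fun p : Fin n × Fin n => p.1 < p.2), f p = ∑ p : Pr n, f p.1 :=
  Finset.sum_subtype _ (by simp) f

lemma bridge_atom {Ω : Type*} [MeasurableSpace Ω] {P : Measure Ω} {n : ℕ}
    {x₁ x₂ xb y₁ y₂ yb κ : ℝ} {c : Ω → Fin n → Bool} {A Y Y' : Ω → Fin n → Fin n → Bool}
    (h : IsObsSBM P n (sbmB x₁ x₂ xb) (sbmB y₁ y₂ yb) κ c A Y Y') (e : Cfg n) :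
    P {ω | Phi c A Y Y' ω = e} =
      ENNReal.ofReal (mass κ ![xb, x₁, x₂] ![yb, y₁, y₂] e) := by
  have hl := h.law e.1 (matOf fun p => (e.2 p).1) (matOf fun p => (e.2 p).2.1)
    (matOf fun p => (e.2 p).2.2) (matOf_symm _) (matOf_diag _) (matOf_symm _) (matOf_diag _)
    (matOf_symm _) (matOf_diag _)
  have hset : {ω | Phi c A Y Y' ω = e} = {ω | c ω = e.1 ∧ A ω = (matOf fun p => (e.2 p).1) ∧
      Y ω = (matOf fun p => (e.2 p).2.1) ∧ Y' ω = (matOf fun p => (e.2 p).2.2)} := by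
    ext ω
    simp only [Set.mem_setOf_eq, eq_matOf_iff _ (h.symmA ω) (h.looplessA ω),
      eq_matOf_iff _ (h.symmY ω) (h.looplessY ω), eq_matOf_iff _ (h.symmY' ω) (h.looplessY' ω)]
    constructor
    · rintro rfl
      simp [Phi]
    · rintro ⟨h1, h2, h3, h4⟩
      refine Prod.ext h1 (funext fun p => ?_)
      exact Prod.ext (h2 p) (Prod.ext (h3 p) (h4 p))
  rw [hset, hl]
  congr 1
  simp only [mass, edgeMass, obsMass, prod_pairs, matOf_pair, sbmB_eq, mul_assoc]
  rw [← Finset.prod_mul_distrib, ← Finset.prod_mul_distrib]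
  congr 1
  refine Finset.prod_congr rfl fun p _ => ?_
  simp only [wt, obsw, pcl, mul_assoc]

lemma bridge {Ω : Type*} [MeasurableSpace Ω] {P : Measure Ω} {n : ℕ}
    {x₁ x₂ xb y₁ y₂ yb κ : ℝ} {c : Ω → Fin n → Bool} {A Y Y' : Ω → Fin n → Fin n → Bool}
    (h : IsObsSBM P n (sbmB x₁ x₂ xb) (sbmB y₁ y₂ yb) κ c A Y Y')
    (hν : IsProbabilityMeasure (nu κ ![xb, x₁, x₂] ![yb, y₁, y₂] n)) (S : Set (Cfg n)) :
    P (Phi c A Y Y' ⁻¹' S) = nu κ ![xb, x₁, x₂] ![yb, y₁, y₂] n S := by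
  have := h.isProb
  set ν := nu κ ![xb, x₁, x₂] ![yb, y₁, y₂] n with hνd
  have hle : ∀ S : Set (Cfg n), P (Phi c A Y Y' ⁻¹' S) ≤ ν S := by
    intro S
    classical
    have h1 : Phi c A Y Y' ⁻¹' S = ⋃ e ∈ S.toFinset, {ω | Phi c A Y Y' ω = e} := by
      ext ω; simp
    have h2 : ν S = ∑ e ∈ S.toFinset, ν {e} := by
      rw [sum_measure_singleton]; simp
    rw [h1, h2]
    refine (measure_biUnion_finset_le _ _).trans (Finset.sum_le_sum fun e _ => ?_)
    rw [bridge_atom h, hνd, nu_singleton]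
  refine le_antisymm (hle S) ?_
  have h3 : ν S = 1 - ν Sᶜ := by
    rw [prob_compl_eq_one_sub (Set.toFinite S).measurableSet]
    exact (ENNReal.sub_sub_cancel ENNReal.one_ne_top prob_le_one).symm
  rw [h3, tsub_le_iff_right]
  calc (1 : ENNReal) = P Set.univ := measure_univ.symm
    _ = P (Phi c A Y Y' ⁻¹' S ∪ Phi c A Y Y' ⁻¹' Sᶜ) := by
      rw [← Set.preimage_union, Set.union_compl_self, Set.preimage_univ]
    _ ≤ _ := measure_union_le _ _
    _ ≤ _ := by gcongr; exact hle _

lemma bridge_null {Ω : Type*} [MeasurableSpace Ω] {P : Measure Ω} {n : ℕ}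
    {x₁ x₂ xb y₁ y₂ yb κ : ℝ} {c : Ω → Fin n → Bool} {A Y Y' : Ω → Fin n → Fin n → Bool}
    (h : IsObsSBM P n (sbmB x₁ x₂ xb) (sbmB y₁ y₂ yb) κ c A Y Y')
    (hν : IsProbabilityMeasure (nu κ ![xb, x₁, x₂] ![yb, y₁, y₂] n)) (S : Set (Cfg n)) :
    NullMeasurableSet (Phi c A Y Y' ⁻¹' S) P := by
  have := h.isProb
  set E := Phi c A Y Y' ⁻¹' S with hE
  have hEc : Eᶜ = Phi c A Y Y' ⁻¹' Sᶜ := rfl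
  -- inner approximation
  set I := (toMeasurable P Eᶜ)ᶜ with hI
  have hIm : MeasurableSet I := (measurableSet_toMeasurable _ _).compl
  have hIE : I ⊆ E := by
    rw [hI, Set.compl_subset_comm]; exact subset_toMeasurable _ _
  have hPI : P I = P E := by
    rw [hI, prob_compl_eq_one_sub (measurableSet_toMeasurable _ _), measure_toMeasurable, hEc,
      bridge h hν, hE, bridge h hν, prob_compl_eq_one_sub (Set.toFinite S).measurableSet]
    exact ENNReal.sub_sub_cancel ENNReal.one_ne_top prob_le_one
  have hae : I =ᵐ[P] toMeasurable P E := by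
    refine ae_eq_of_subset_of_measure_ge (hIE.trans (subset_toMeasurable _ _)) ?_
      hIm.nullMeasurableSet (measure_ne_top _ _)
    rw [measure_toMeasurable, hPI]
  have hae2 : I =ᵐ[P] E := by
    refine Filter.EventuallyLE.antisymm (Filter.Eventually.of_forall hIE) ?_
    refine Filter.EventuallyLE.trans (Filter.Eventually.of_forall (subset_toMeasurable P E)) ?_
    exact hae.symm.le
  exact hIm.nullMeasurableSet.congr hae2

lemma levy_gen (μ : ℕ → Measure ℝ) (hp : ∀ᶠ n in atTop, IsProbabilityMeasure (μ n))
    (μ₀ : Measure ℝ) [IsProbabilityMeasure μ₀]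
    (hc : ∀ t, Tendsto (fun n => charFun (μ n) t) atTop (nhds (charFun μ₀ t)))
    (S : Set ℝ) (hS : μ₀ (frontier S) = 0) :
    Tendsto (fun n => (μ n).real S) atTop (nhds (μ₀.real S)) := by
  classical
  let m : ℕ → ProbabilityMeasure ℝ := fun n =>
    if h : IsProbabilityMeasure (μ n) then ⟨μ n, h⟩ else ⟨Measure.dirac 0, inferInstance⟩
  let m₀ : ProbabilityMeasure ℝ := ⟨μ₀, inferInstance⟩
  have hm : ∀ᶠ n in atTop, (m n : Measure ℝ) = μ n := by
    filter_upwards [hp] with n hn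
    simp [m, hn]
  have ht : Tendsto m atTop (nhds m₀) := by
    rw [ProbabilityMeasure.tendsto_iff_tendsto_charFun]
    intro t
    refine (hc t).congr' ?_
    filter_upwards [hm] with n hn
    rw [hn]
  have h1 := ProbabilityMeasure.tendsto_measure_of_null_frontier_of_tendsto' ht (E := S) hS
  have h2 := (ENNReal.tendsto_toReal (measure_ne_top _ S)).comp h1
  refine h2.congr' ?_
  filter_upwards [hm] with n hn
  simp [hn, Measure.real]

lemma levy_gauss (μ : ℕ → Measure ℝ) (hp : ∀ᶠ n in atTop, IsProbabilityMeasure (μ n))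
    (v : NNReal) (hv : v ≠ 0)
    (hc : ∀ t : ℝ, Tendsto (fun n => charFun (μ n) t) atTop
      (nhds (Complex.exp (-((v : ℝ) * t ^ 2 / 2 : ℝ))))) (x : ℝ) :
    Tendsto (fun n => (μ n).real (Set.Iic x)) atTop
      (nhds ((gaussianReal 0 v).real (Set.Iic x))) := by
  have := nullSingletonClass_gaussianReal (μ := 0) hv
  refine levy_gen μ hp _ (fun t => ?_) _ (by rw [frontier_Iic]; exact measure_singleton x)
  rw [charFun_gaussianReal]
  convert hc t using 3
  push_cast
  ring

lemma levy_const (μ : ℕ → Measure ℝ) (hp : ∀ᶠ n in atTop, IsProbabilityMeasure (μ n))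
    (m : ℝ)
    (hc : ∀ t : ℝ, Tendsto (fun n => charFun (μ n) t) atTop
      (nhds (Complex.exp ((t * m : ℝ) * Complex.I)))) (ε : ℝ) (hε : 0 < ε) :
    Tendsto (fun n => (μ n).real {y | ε ≤ |y - m|}) atTop (nhds 0) := by
  have hcl : IsClosed {y : ℝ | ε ≤ |y - m|} :=
    isClosed_le continuous_const (by fun_prop)
  have h0 : (Measure.dirac m) {y : ℝ | ε ≤ |y - m|} = 0 := by
    rw [Measure.dirac_apply' _ hcl.measurableSet]
    simp [hε]
  have := levy_gen μ hp (Measure.dirac m) (fun t => ?_) {y | ε ≤ |y - m|}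
    (measure_mono_null hcl.frontier_subset h0)
  · simpa [Measure.real, h0] using this
  · rw [charFun_dirac]
    convert hc t using 3
    simp

/-- The gaussian distribution function. -/
def gF (v : NNReal) (x : ℝ) : ℝ := (gaussianReal 0 v).real (Set.Iic x)

lemma gF_eq (v : NNReal) (x : ℝ) : gF v x = cdf (gaussianReal 0 v) x := by
  rw [cdf_eq_real]; rfl

lemma gF_cont (v : NNReal) (hv : v ≠ 0) : Continuous (gF v) := by
  have := nullSingletonClass_gaussianReal (μ := 0) hv
  have he : gF v = cdf (gaussianReal 0 v) := funext (gF_eq v)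
  rw [he, continuous_iff_continuousAt]
  intro x
  rw [(cdf (gaussianReal 0 v)).mono.continuousAt_iff_leftLim_eq_rightLim,
    StieltjesFunction.rightLim_eq]
  have h1 := (cdf (gaussianReal 0 v)).measure_singleton x
  rw [measure_cdf, measure_singleton] at h1
  have h2 := ENNReal.ofReal_eq_zero.1 h1.symm
  have h3 := (cdf (gaussianReal 0 v)).mono.leftLim_le (le_refl x)
  linarith

lemma gF_bot (v : NNReal) : Tendsto (gF v) atBot (nhds 0) := by
  have he : gF v = cdf (gaussianReal 0 v) := funext (gF_eq v)
  rw [he]; exact tendsto_cdf_atBot _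

lemma gF_top (v : NNReal) : Tendsto (gF v) atTop (nhds 1) := by
  have he : gF v = cdf (gaussianReal 0 v) := funext (gF_eq v)
  rw [he]; exact tendsto_cdf_atTop _

section prob
variable {Ω : ℕ → Type} [∀ n, MeasurableSpace (Ω n)] {ν : ∀ n, Measure (Ω n)}

/-- Convergence to zero in probability. -/
def TP (ν : ∀ n, Measure (Ω n)) (R : ∀ n, Ω n → ℝ) : Prop :=
  ∀ ε : ℝ, 0 < ε → Tendsto (fun n => (ν n).real {e | ε ≤ |R n e|}) atTop (nhds 0)

def BP (ν : ∀ n, Measure (Ω n)) (U : ∀ n, Ω n → ℝ) : Prop :=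
  ∀ ε : ℝ, 0 < ε → ∃ K : ℝ, ∀ᶠ n in atTop, (ν n).real {e | K ≤ |U n e|} ≤ ε

lemma TP_of_le (_hp : ∀ᶠ n in atTop, IsProbabilityMeasure (ν n)) {R : ∀ n, Ω n → ℝ}
    (h : ∀ ε : ℝ, 0 < ε → ∀ η : ℝ, 0 < η → ∀ᶠ n in atTop,
      (ν n).real {e | ε ≤ |R n e|} ≤ η) : TP ν R := by
  intro ε hε
  rw [Metric.tendsto_nhds]
  intro η hη
  filter_upwards [h ε hε (η / 2) (by positivity)] with n hn
  rw [Real.dist_eq, sub_zero, abs_of_nonneg measureReal_nonneg]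
  linarith

lemma TP.ev {R : ∀ n, Ω n → ℝ} (h : TP ν R) {ε η : ℝ} (hε : 0 < ε) (hη : 0 < η) :
    ∀ᶠ n in atTop, (ν n).real {e | ε ≤ |R n e|} ≤ η :=
  ((h ε hε).eventually_lt_const hη).mono fun _ h => h.le

lemma TP.add (hp : ∀ᶠ n in atTop, IsProbabilityMeasure (ν n)) {R R' : ∀ n, Ω n → ℝ}
    (h : TP ν R) (h' : TP ν R') : TP ν (fun n e => R n e + R' n e) := by
  refine TP_of_le hp fun ε hε η hη => ?_
  filter_upwards [hp, h.ev (half_pos hε) (half_pos hη), h'.ev (half_pos hε) (half_pos hη)]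
    with n hn h1 h2
  have hs : {e | ε ≤ |R n e + R' n e|} ⊆ {e | ε / 2 ≤ |R n e|} ∪ {e | ε / 2 ≤ |R' n e|} := by
    intro e he
    by_contra hc
    simp only [Set.mem_union, Set.mem_ofPred_eq, not_or, not_le] at hc he
    have := abs_add_le (R n e) (R' n e)
    linarith
  have h3 := (measureReal_mono (μ := ν n) hs).trans (measureReal_union_le _ _)
  linarith

lemma TP.ratio (hp : ∀ᶠ n in atTop, IsProbabilityMeasure (ν n)) {U V Z : ∀ n, Ω n → ℝ}
    (hU : BP ν U) {m : ℝ} (hm : 0 < m) (hV : TP ν (fun n e => V n e - m))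
    (hZ : ∀ᶠ n in atTop, ∀ e, V n e ≠ 0 → Z n e = U n e / V n e) (a : ℝ) :
    TP ν (fun n e => a * (Z n e - U n e / m)) := by
  refine TP_of_le hp fun ε hε η hη => ?_
  obtain ⟨K, hK⟩ := hU (η / 2) (half_pos hη)
  set C : ℝ := (|a| + 1) * (|K| + 1) * (2 / m ^ 2) with hC
  have hCp : 0 < C := by positivity
  set δ := min (m / 2) (ε / (2 * C)) with hδ
  have hδp : 0 < δ := by positivity
  filter_upwards [hp, hK, hV.ev hδp (half_pos hη), hZ] with n hn h1 h2 h3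
  have hs : {e | ε ≤ |a * (Z n e - U n e / m)|} ⊆
      {e | K ≤ |U n e|} ∪ {e | δ ≤ |V n e - m|} := by
    intro e he
    by_contra hc
    simp only [Set.mem_union, Set.mem_ofPred_eq, not_or, not_le] at hc he
    obtain ⟨hc1, hc2⟩ := hc
    have hd1 : δ ≤ m / 2 := min_le_left _ _
    have hd2 : δ ≤ ε / (2 * C) := min_le_right _ _
    have hV2 : m / 2 < V n e := by
      have := (abs_lt.1 hc2).1
      linarith
    have hV0 : 0 < V n e := by linarith
    rw [h3 e hV0.ne'] at he
    have heq : a * (U n e / V n e - U n e / m) = a * U n e * ((m - V n e) / (V n e * m)) := by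
      field_simp
    rw [heq, abs_mul, abs_mul, abs_div, abs_of_pos (mul_pos hV0 hm), abs_sub_comm] at he
    have hb : |V n e - m| / (V n e * m) ≤ δ * (2 / m ^ 2) := by
      rw [div_le_iff₀ (by positivity)]
      have : δ * (2 / m ^ 2) * (V n e * m) = δ * (2 * V n e / m) := by field_simp
      rw [this]
      have h5 : 1 ≤ 2 * V n e / m := by rw [le_div_iff₀ hm]; linarith
      nlinarith
    have hUK : |U n e| ≤ |K| + 1 := by
      have := le_abs_self K
      linarith
    have hfin : |a| * |U n e| * (|V n e - m| / (V n e * m))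
        ≤ (|a| + 1) * (|K| + 1) * (δ * (2 / m ^ 2)) := by
      gcongr
      linarith
    have : (|a| + 1) * (|K| + 1) * (δ * (2 / m ^ 2)) = C * δ := by rw [hC]; ring
    have h6 : C * δ ≤ ε / 2 := by
      calc C * δ ≤ C * (ε / (2 * C)) := by gcongr
        _ = ε / 2 := by field_simp
    linarith
  have h4 := (measureReal_mono (μ := ν n) hs).trans (measureReal_union_le _ _)
  linarith

lemma BP_of_gauss (hp : ∀ᶠ n in atTop, IsProbabilityMeasure (ν n)) {U : ∀ n, Ω n → ℝ}
    {v : NNReal}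
    (h : ∀ x, Tendsto (fun n => (ν n).real {e | U n e ≤ x}) atTop (nhds (gF v x)))
    (hms : ∀ n x, MeasurableSet {e | U n e ≤ x}) : BP ν U := by
  intro ε hε
  have h1 := (gF_bot v).eventually_lt_const (show (0:ℝ) < ε / 2 by positivity)
  have h2 := (gF_top v).eventually_const_lt (show 1 - ε / 2 < (1:ℝ) by linarith)
  obtain ⟨K1, hK1⟩ := h1.exists
  obtain ⟨K2, hK2⟩ := h2.exists
  refine ⟨max (-K1) (K2 + 1), ?_⟩
  filter_upwards [hp, (h K1).eventually_lt_const hK1, (h K2).eventually_const_lt hK2]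
    with n hn h3 h4
  have hs : {e | max (-K1) (K2 + 1) ≤ |U n e|} ⊆ {e | U n e ≤ K1} ∪ {e | U n e ≤ K2}ᶜ := by
    intro e he
    by_contra hc
    simp only [Set.mem_union, Set.mem_ofPred_eq, Set.mem_compl_iff, not_or, not_le, not_lt]
      at he hc
    have h5 := (le_max_left _ _).trans he
    have h6 := (le_max_right _ _).trans he
    rcases abs_choice (U n e) with h9 | h9 <;> rw [h9] at h5 h6 <;> linarith [hc.1, hc.2]
  have h5 := (measureReal_mono (μ := ν n) hs).trans (measureReal_union_le _ _)
  rw [probReal_compl_eq_one_sub (hms n K2)] at h5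
  linarith

lemma slutsky (hp : ∀ᶠ n in atTop, IsProbabilityMeasure (ν n)) {L T : ∀ n, Ω n → ℝ}
    {F : ℝ → ℝ} (hF : Continuous F)
    (h : ∀ x, Tendsto (fun n => (ν n).real {e | L n e ≤ x}) atTop (nhds (F x)))
    (hT : TP ν (fun n e => T n e - L n e)) (x : ℝ) :
    Tendsto (fun n => (ν n).real {e | T n e ≤ x}) atTop (nhds (F x)) := by
  rw [Metric.tendsto_nhds]
  intro η hη
  obtain ⟨δ, hδ, hδF⟩ := Metric.continuous_iff.1 hF x (η / 3) (by positivity)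
  have hd : 0 < δ / 2 := by positivity
  have h1 := hδF (x + δ / 2) (by rw [Real.dist_eq]; simp [abs_of_pos hd]; exact hδ)
  have h2 := hδF (x - δ / 2) (by rw [Real.dist_eq]; simp [abs_of_pos hd]; exact hδ)
  rw [Real.dist_eq, abs_lt] at h1 h2
  filter_upwards [hp, hT.ev hd (show 0 < η / 6 by positivity),
    (Metric.tendsto_nhds.1 (h (x + δ / 2))) (η / 3) (by positivity),
    (Metric.tendsto_nhds.1 (h (x - δ / 2))) (η / 3) (by positivity)] with n hn h3 h4 h5
  rw [Real.dist_eq, abs_lt] at h4 h5 ⊢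
  have hs1 : {e | T n e ≤ x} ⊆ {e | L n e ≤ x + δ / 2} ∪ {e | δ / 2 ≤ |T n e - L n e|} := by
    intro e he
    by_contra hc
    simp only [Set.mem_union, Set.mem_ofPred_eq, not_or, not_le] at hc he
    have := (abs_lt.1 hc.2).1
    linarith [hc.1]
  have hs2 : {e | L n e ≤ x - δ / 2} ⊆ {e | T n e ≤ x} ∪ {e | δ / 2 ≤ |T n e - L n e|} := by
    intro e he
    by_contra hc
    simp only [Set.mem_union, Set.mem_ofPred_eq, not_or, not_le] at hc he
    have := (abs_lt.1 hc.2).2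
    linarith [hc.1]
  have h6 := (measureReal_mono (μ := ν n) hs1).trans (measureReal_union_le _ _)
  have h7 := (measureReal_mono (μ := ν n) hs2).trans (measureReal_union_le _ _)
  constructor <;> linarith

end prob

lemma exp_lim (a : ℕ → ℝ) (a₀ b : ℝ) (ha : Tendsto a atTop (nhds a₀)) :
    Tendsto (fun n : ℕ => (n : ℂ) ^ 2 *
      (Complex.exp (((a n / n + b / (n : ℝ) ^ 2 : ℝ) : ℂ) * Complex.I) - 1
        - ((a n / n : ℝ) : ℂ) * Complex.I)) atTop
      (nhds ((b : ℂ) * Complex.I - ((a₀ ^ 2 / 2 : ℝ) : ℂ))) := by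
  have hinv : Tendsto (fun n : ℕ => ((n : ℝ))⁻¹) atTop (nhds 0) :=
    tendsto_inv_atTop_nhds_zero_nat
  set y : ℕ → ℝ := fun n => a n + b * (n : ℝ)⁻¹ with hy
  have hyl : Tendsto y atTop (nhds a₀) := by
    have := ha.add (hinv.const_mul b)
    simpa [hy] using this
  set r : ℕ → ℝ := fun n => a n / n + b / (n : ℝ) ^ 2 with hr
  have hry : ∀ᶠ n : ℕ in atTop, r n = y n * (n : ℝ)⁻¹ := by
    filter_upwards [eventually_gt_atTop 0] with n hn
    have : (n : ℝ) ≠ 0 := by positivity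
    simp only [hr, hy]
    field_simp
  have hr0 : Tendsto r atTop (nhds 0) := by
    have := hyl.mul hinv
    rw [mul_zero] at this
    exact this.congr' (hry.mono fun n hn => hn.symm)
  -- remainder
  have hrem : Tendsto (fun n : ℕ => (n : ℂ) ^ 2 * (Complex.exp ((r n : ℂ) * Complex.I)
      - (1 + (r n : ℂ) * Complex.I + ((r n : ℂ) * Complex.I) ^ 2 / 2))) atTop (nhds 0) := by
    have hb : Tendsto (fun n : ℕ => |y n| ^ 3 * (n : ℝ)⁻¹) atTop (nhds 0) := by
      have := (hyl.abs.pow 3).mul hinv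
      simpa using this
    refine squeeze_zero_norm' ?_ hb
    have hsmall : ∀ᶠ n in atTop, |r n| < 1 := by
      have := hr0.abs
      rw [abs_zero] at this
      exact this.eventually_lt_const one_pos
    filter_upwards [eventually_gt_atTop 0, hry, hsmall] with n hn h1 h2
    have hn' : (0 : ℝ) < n := by positivity
    have hnorm : ‖(r n : ℂ) * Complex.I‖ = |r n| := by simp
    have h3 := Complex.exp_bound (x := (r n : ℂ) * Complex.I) (by rw [hnorm]; exact h2.le)
      (n := 3) (by norm_num)
    rw [hnorm] at h3
    simp only [Finset.sum_range_succ, Finset.sum_range_zero, Nat.factorial] at h3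
    have h4 : ‖Complex.exp ((r n : ℂ) * Complex.I)
      - (1 + (r n : ℂ) * Complex.I + ((r n : ℂ) * Complex.I) ^ 2 / 2)‖ ≤ |r n| ^ 3 := by
      refine le_trans (le_of_eq ?_) (h3.trans ?_)
      · congr 2
        norm_num
      · have : 0 ≤ |r n| ^ 3 := by positivity
        norm_num
        linarith
    rw [norm_mul, norm_pow, Complex.norm_natCast]
    calc (n : ℝ) ^ 2 * _ ≤ (n : ℝ) ^ 2 * |r n| ^ 3 := by gcongr
      _ = |y n| ^ 3 * (n : ℝ)⁻¹ := by
        rw [h1, abs_mul, abs_of_pos (inv_pos.2 hn')]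
        field_simp
  have hmain : Tendsto (fun n : ℕ => (b : ℂ) * Complex.I - ((y n ^ 2 / 2 : ℝ) : ℂ)) atTop
      (nhds ((b : ℂ) * Complex.I - ((a₀ ^ 2 / 2 : ℝ) : ℂ))) :=
    tendsto_const_nhds.sub ((Complex.continuous_ofReal.tendsto _).comp ((hyl.pow 2).div_const 2))
  have := hrem.add hmain
  rw [zero_add] at this
  refine this.congr' ?_
  filter_upwards [eventually_gt_atTop 0, hry] with n hn h1
  have hn' : (n : ℂ) ≠ 0 := by exact_mod_cast hn.ne'
  have hI : (r n : ℂ) ^ 2 * (n : ℂ) ^ 2 = (y n : ℂ) ^ 2 := by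
    rw [h1]; push_cast; field_simp
  have h5 : (n : ℂ) ^ 2 * (r n : ℂ) = n ^ 2 * ((a n / n : ℝ) : ℂ) + b := by
    simp only [hr]; push_cast; field_simp
  have hII := Complex.I_sq
  change _ = (n : ℂ) ^ 2 * (Complex.exp ((r n : ℂ) * Complex.I) - 1
        - ((a n / n : ℝ) : ℂ) * Complex.I)
  generalize Complex.exp ((r n : ℂ) * Complex.I) = E
  push_cast at h5 ⊢
  linear_combination (-(Complex.I ^ 2) / 2) * hI + (-1/2 * (y n : ℂ) ^ 2) * hII - Complex.I * h5

def wM (w : Bool × Bool × Bool) : ℝ := if w.2.1 then 1 else 0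
def wD (w : Bool × Bool × Bool) : ℝ := if w.2.1 != w.2.2 then 1 else 0
def wS (be : ℝ) (w : Bool × Bool × Bool) : ℝ := wD w / 2 - be * wM w

def chi (b be u v : ℝ) (n : ℕ) : ℂ :=
  ∑ w, (wt b be w : ℂ) *
    Complex.exp (((u * wS be w / n + v * wM w / (n : ℝ) ^ 2 : ℝ) : ℂ) * Complex.I)

def theta (q β u v : ℝ) : ℂ :=
  ((v * (q * (1 - β)) : ℝ) : ℂ) * Complex.I - ((u ^ 2 * (q * β * (1 - β) / 2) / 2 : ℝ) : ℂ)

lemma wt_sum_S (b be : ℝ) : ∑ w, wt b be w * wS be w = 0 := by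
  simp [Fintype.sum_prod_type, wt, obsw, wS, wD, wM]; ring

lemma chi_lim (b be : ℕ → ℝ) (q β u v : ℝ) (hb : Tendsto b atTop (nhds q))
    (hbe : Tendsto be atTop (nhds β)) :
    Tendsto (fun n : ℕ => (n : ℂ) ^ 2 * (chi (b n) (be n) u v n - 1)) atTop
      (nhds (theta q β u v)) := by
  have h1 : ∀ w, Tendsto (fun n : ℕ => (wt (b n) (be n) w : ℂ) * ((n : ℂ) ^ 2 *
      (Complex.exp (((u * wS (be n) w / n + v * wM w / (n : ℝ) ^ 2 : ℝ) : ℂ) * Complex.I) - 1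
        - ((u * wS (be n) w / n : ℝ) : ℂ) * Complex.I))) atTop
      (nhds ((wt q β w : ℂ) * (((v * wM w : ℝ) : ℂ) * Complex.I
        - (((u * wS β w) ^ 2 / 2 : ℝ) : ℂ)))) := by
    intro w
    have hw : Tendsto (fun n => wt (b n) (be n) w) atTop (nhds (wt q β w)) := by
      have hc : Continuous (fun p : ℝ × ℝ => wt p.1 p.2 w) := by
        obtain ⟨x, y, z⟩ := w
        cases x <;> cases y <;> cases z <;>
          simp only [wt, obsw, if_true, if_false, Bool.false_eq_true] <;> fun_prop
      exact (hc.tendsto (q, β)).comp (hb.prodMk_nhds hbe)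
    have hs : Tendsto (fun n => u * wS (be n) w) atTop (nhds (u * wS β w)) := by
      unfold wS
      exact (tendsto_const_nhds.sub (hbe.mul_const _)).const_mul u
    exact ((Complex.continuous_ofReal.tendsto _).comp hw).mul (exp_lim _ _ _ hs)
  have h2 := tendsto_finsetSum Finset.univ (fun w _ => h1 w)
  have h3 : ∑ w, ((wt q β w : ℂ) * (((v * wM w : ℝ) : ℂ) * Complex.I
        - (((u * wS β w) ^ 2 / 2 : ℝ) : ℂ))) = theta q β u v := by
    simp only [Fintype.sum_prod_type, wt, obsw, wS, wD, wM, theta, Fintype.sum_bool]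
    push_cast
    simp
    ring
  rw [h3] at h2
  refine h2.congr fun n => ?_
  have hA : ∑ w, (wt (b n) (be n) w : ℂ) = 1 := by
    rw [← Complex.ofReal_sum, wt_sum]; simp
  have hB : ∑ w, (wt (b n) (be n) w : ℂ) * (wS (be n) w : ℂ) = 0 := by
    have := wt_sum_S (b n) (be n)
    have h := congrArg (fun x : ℝ => (x : ℂ)) this
    simpa using h
  unfold chi
  have : ∀ w, (wt (b n) (be n) w : ℂ) * ((n : ℂ) ^ 2 *
      (Complex.exp (((u * wS (be n) w / n + v * wM w / (n : ℝ) ^ 2 : ℝ) : ℂ) * Complex.I) - 1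
        - ((u * wS (be n) w / n : ℝ) : ℂ) * Complex.I)) =
      (n : ℂ) ^ 2 * ((wt (b n) (be n) w : ℂ) *
      Complex.exp (((u * wS (be n) w / n + v * wM w / (n : ℝ) ^ 2 : ℝ) : ℂ) * Complex.I))
      - (n : ℂ) ^ 2 * (wt (b n) (be n) w : ℂ)
      - ((n : ℂ) ^ 2 * u / n * Complex.I) * ((wt (b n) (be n) w : ℂ) * (wS (be n) w : ℂ)) := by
    intro w; push_cast; ring
  rw [Finset.sum_congr rfl fun w _ => this w, Finset.sum_sub_distrib, Finset.sum_sub_distrib,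
    ← Finset.mul_sum, ← Finset.mul_sum, ← Finset.mul_sum, hA, hB]
  ring

lemma chi_norm {b be : ℝ} (hb : b ∈ Set.Icc (0:ℝ) 1) (hbe : be ∈ Set.Icc (0:ℝ) 1)
    (u v : ℝ) (n : ℕ) : ‖chi b be u v n‖ ≤ 1 := by
  unfold chi
  refine (norm_sum_le _ _).trans ?_
  rw [← wt_sum b be]
  refine Finset.sum_le_sum fun w _ => ?_
  rw [norm_mul, Complex.norm_exp_ofReal_mul_I, mul_one, Complex.norm_real, Real.norm_eq_abs,
    abs_of_nonneg (wt_nonneg hb hbe w)]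

lemma prod_diff {ι : Type*} (s : Finset ι) (f g : ι → ℂ) (hf : ∀ i, ‖f i‖ ≤ 1)
    (hg : ∀ i, ‖g i‖ ≤ 1) : ‖∏ i ∈ s, f i - ∏ i ∈ s, g i‖ ≤ ∑ i ∈ s, ‖f i - g i‖ := by
  classical
  induction s using Finset.induction_on with
  | empty => simp
  | insert a s ha ih =>
    rw [Finset.prod_insert ha, Finset.prod_insert ha, Finset.sum_insert ha]
    have hp : ‖∏ i ∈ s, g i‖ ≤ 1 := by
      rw [norm_prod]
      exact Finset.prod_le_one (fun _ _ => norm_nonneg _) (fun i _ => hg i)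
    calc ‖f a * ∏ i ∈ s, f i - g a * ∏ i ∈ s, g i‖
        = ‖(f a - g a) * ∏ i ∈ s, g i + f a * (∏ i ∈ s, f i - ∏ i ∈ s, g i)‖ := by
          congr 1; ring
      _ ≤ ‖f a - g a‖ * ‖∏ i ∈ s, g i‖ + ‖f a‖ * ‖∏ i ∈ s, f i - ∏ i ∈ s, g i‖ := by
          refine (norm_add_le _ _).trans ?_
          rw [norm_mul, norm_mul]
      _ ≤ ‖f a - g a‖ * 1 + 1 * ‖∏ i ∈ s, f i - ∏ i ∈ s, g i‖ := by
          gcongr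
          exact hf a
      _ ≤ _ := by linarith

/-- Number of group one labels. -/
def cnt {n : ℕ} (l : Fin n → Bool) : ℕ := (Finset.univ.filter (fun i => l i = true)).card

lemma cnt_le {n : ℕ} (l : Fin n → Bool) : cnt l ≤ n :=
  (Finset.card_le_univ _).trans (by simp)

lemma two_sum_pairs {n : ℕ} (f : Fin n → Fin n → ℂ) (hf : ∀ i j, f i j = f j i) :
    2 * ∑ p : Pr n, f p.1.1 p.1.2 + ∑ i, f i i = ∑ i, ∑ j, f i j := by
  have h1 : ∑ p : Pr n, f p.1.1 p.1.2 = ∑ i, ∑ j, if i < j then f i j else 0 := by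
    rw [← Fintype.sum_prod_type' (fun i j => if i < j then f i j else 0), ← Finset.sum_filter]
    exact (Finset.sum_subtype _ (by simp) (fun p : Fin n × Fin n => f p.1 p.2)).symm
  have h2 : ∑ i, ∑ j, (if i < j then f i j else 0) = ∑ i, ∑ j, if j < i then f i j else 0 := by
    rw [Finset.sum_comm]
    refine Finset.sum_congr rfl fun i _ => Finset.sum_congr rfl fun j _ => ?_
    rw [hf]
  have h3 : ∑ i, f i i = ∑ i, ∑ j, if i = j then f i j else 0 := by simp
  rw [two_mul]
  nth_rewrite 2 [h1]
  rw [h2, h1, h3, ← Finset.sum_add_distrib, ← Finset.sum_add_distrib]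
  refine Finset.sum_congr rfl fun i _ => ?_
  rw [← Finset.sum_add_distrib, ← Finset.sum_add_distrib]
  refine Finset.sum_congr rfl fun j _ => ?_
  rcases lt_trichotomy i j with h | h | h
  · simp [h, h.not_gt, h.ne]
  · simp [h]
  · simp [h, h.not_gt, h.ne']

lemma pair_sum {n : ℕ} (l : Fin n → Bool) (θ : Fin 3 → ℂ) :
    ∑ p : Pr n, θ (pcl l p) = θ 0 * (cnt l * (n - cnt l)) + θ 1 * ((cnt l : ℂ) ^ 2 - cnt l) / 2
      + θ 2 * ((n - cnt l : ℂ) ^ 2 - (n - cnt l)) / 2 := by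
  set t : Fin n → ℂ := fun i => if l i then 1 else 0 with ht
  have hs : ∑ i, t i = cnt l := by simp [ht, cnt]
  have hs2 : ∑ i, (1 - t i) = n - cnt l := by rw [Finset.sum_sub_distrib, hs]; simp
  have hf : ∀ i j, θ (cl (l i) (l j)) = θ 1 * (t i * t j) + θ 2 * ((1 - t i) * (1 - t j))
      + θ 0 * (t i * (1 - t j)) + θ 0 * ((1 - t i) * t j) := by
    intro i j
    simp only [ht]
    cases l i <;> cases l j <;> simp [cl]
  have hd : ∀ i, θ (cl (l i) (l i)) = θ 1 * t i + θ 2 * (1 - t i) := by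
    intro i
    simp only [ht]
    cases l i <;> simp [cl]
  have h := two_sum_pairs (fun i j => θ (cl (l i) (l j))) (fun i j => by
    cases l i <;> cases l j <;> rfl)
  simp only [hd] at h
  rw [Finset.sum_congr rfl fun i _ => Finset.sum_congr rfl fun j _ => hf i j] at h
  simp only [Finset.sum_add_distrib, ← Finset.mul_sum, ← Finset.sum_mul, hs, hs2] at h
  change ∑ p : Pr n, θ (cl (l p.1.1) (l p.1.2)) = _
  linear_combination h / 2

lemma labelMass_eq (κ : ℝ) {n : ℕ} (l : Fin n → Bool) :
    labelMass κ l = κ ^ cnt l * (1 - κ) ^ (n - cnt l) := by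
  unfold labelMass
  rw [Finset.prod_ite, Finset.prod_const, Finset.prod_const]
  congr 2
  have := Finset.card_filter_add_card_filter_not (s := (Finset.univ : Finset (Fin n)))
    (fun i => l i = true)
  simp only [Finset.card_univ, Fintype.card_fin] at this
  unfold cnt
  omega

lemma label_lim {κ : ℝ} (h0 : 0 ≤ κ) (h1 : κ ≤ 1) (G : ℝ → ℂ) (hG : Continuous G) :
    Tendsto (fun n : ℕ => ∑ l : Fin n → Bool, (labelMass κ l : ℂ) * G ((cnt l : ℝ) / n)) atTop
      (nhds (G κ)) := by
  let f : C(unitInterval, ℂ) := ⟨fun x => G x, by fun_prop⟩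
  let k : unitInterval := ⟨κ, h0, h1⟩
  have hb := bernsteinApproximation_uniform f
  have hb2 := ((continuous_eval_const (F := C(unitInterval, ℂ)) k).tendsto f).comp hb
  refine hb2.congr fun n => ?_
  simp only [Function.comp, bernsteinApproximation.apply, bernstein_apply]
  have hz : ∀ j : Fin (n + 1), f (bernstein.z j) = G ((j : ℕ) / (n : ℝ)) := fun j => rfl
  simp only [hz]
  rw [Fin.sum_univ_eq_sum_range (fun j : ℕ =>
    ((n.choose j : ℝ) * (k : ℝ) ^ j * (1 - (k : ℝ)) ^ (n - j)) • G ((j : ℕ) / (n : ℝ))) (n + 1)]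
  have hp := Finset.sum_powerset_apply_card (fun j : ℕ =>
    (((k : ℝ) ^ j * (1 - (k : ℝ)) ^ (n - j) : ℝ) : ℂ) * G ((j : ℕ) / (n : ℝ)))
    (x := (Finset.univ : Finset (Fin n)))
  simp only [Finset.card_univ, Fintype.card_fin, Finset.powerset_univ] at hp
  have he : ∑ l : Fin n → Bool, (labelMass κ l : ℂ) * G ((cnt l : ℝ) / n) =
      ∑ s : Finset (Fin n), (((k : ℝ) ^ s.card * (1 - (k : ℝ)) ^ (n - s.card) : ℝ) : ℂ) *
        G ((s.card : ℕ) / (n : ℝ)) := by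
    refine Finset.sum_nbij' (fun l => Finset.univ.filter (fun i => l i = true))
      (fun s i => decide (i ∈ s)) (by simp) (by simp) ?_ ?_ ?_
    · intro l _; funext i; simp
    · intro s _; ext i; simp
    · intro l _
      rw [labelMass_eq]
      rfl
  rw [he, hp]
  refine Finset.sum_congr rfl fun j _ => ?_
  rw [nsmul_eq_mul, Complex.real_smul]
  push_cast
  ring

def Xst (be u v : Fin 3 → ℝ) {n : ℕ} (e : Cfg n) : ℝ :=
  ∑ p : Pr n, (u (pcl e.1 p) * wS (be (pcl e.1 p)) (e.2 p) / n
    + v (pcl e.1 p) * wM (e.2 p) / (n : ℝ) ^ 2)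

def rho (κ : ℝ) : Fin 3 → ℝ := ![κ * (1 - κ), κ ^ 2 / 2, (1 - κ) ^ 2 / 2]

lemma char_formula {n : ℕ} {κ : ℝ} (h0 : 0 ≤ κ) (h1 : κ ≤ 1) {b be : Fin 3 → ℝ}
    (hb : ∀ k, b k ∈ Set.Icc (0:ℝ) 1) (hbe : ∀ k, be k ∈ Set.Icc (0:ℝ) 1) (u v : Fin 3 → ℝ) :
    ∫ e, Complex.exp ((Xst be u v e : ℂ) * Complex.I) ∂(nu κ b be n) =
      ∑ l : Fin n → Bool, (labelMass κ l : ℂ) *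
        ∏ p : Pr n, chi (b (pcl l p)) (be (pcl l p)) (u (pcl l p)) (v (pcl l p)) n := by
  rw [nu_integral h0 h1 hb hbe]
  have := sum_mass_mul (n := n) κ b be (fun k w => Complex.exp (((u k * wS (be k) w / n
    + v k * wM w / (n : ℝ) ^ 2 : ℝ) : ℂ) * Complex.I))
  unfold chi
  rw [← this]
  refine Finset.sum_congr rfl fun e _ => ?_
  rw [← Complex.exp_sum, ← Finset.sum_mul, ← Complex.ofReal_sum]
  rfl

lemma theta_re (q β u v : ℝ) (hq : 0 ≤ q) (hβ0 : 0 ≤ β) (hβ1 : β ≤ 1) :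
    (theta q β u v).re ≤ 0 := by
  have h : 0 ≤ 1 - β := by linarith
  have : 0 ≤ u ^ 2 * (q * β * (1 - β) / 2) / 2 := by positivity
  unfold theta
  rw [Complex.sub_re, Complex.re_ofReal_mul, Complex.I_re, Complex.ofReal_re]
  linarith

lemma exp_lim2 (θ : ℂ) :
    Tendsto (fun n : ℕ => (n : ℂ) ^ 2 * (Complex.exp (θ / (n : ℂ) ^ 2) - 1)) atTop
      (nhds θ) := by
  have hz : Tendsto (fun n : ℕ => θ / (n : ℂ) ^ 2) atTop (nhds 0) := by
    have h : Tendsto (fun n : ℕ => ((n : ℂ))⁻¹) atTop (nhds 0) :=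
      tendsto_inv_atTop_nhds_zero_nat
    have := (h.pow 2).const_mul θ
    simpa [div_eq_mul_inv] using this
  have hrem : Tendsto (fun n : ℕ => (n : ℂ) ^ 2 *
      (Complex.exp (θ / (n : ℂ) ^ 2) - 1 - θ / (n : ℂ) ^ 2)) atTop (nhds 0) := by
    have hb : Tendsto (fun n : ℕ => ‖θ‖ * ‖θ / (n : ℂ) ^ 2‖) atTop (nhds 0) := by
      simpa using (hz.norm).const_mul ‖θ‖
    refine squeeze_zero_norm' ?_ hb
    have hsmall : ∀ᶠ n : ℕ in atTop, ‖θ / (n : ℂ) ^ 2‖ < 1 := by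
      have := hz.norm
      rw [norm_zero] at this
      exact this.eventually_lt_const one_pos
    filter_upwards [hsmall, eventually_gt_atTop 0] with n hn hn0
    have hn' : (0:ℝ) < n := by positivity
    rw [norm_mul]
    calc ‖(n : ℂ) ^ 2‖ * _ ≤ ‖(n : ℂ) ^ 2‖ * ‖θ / (n : ℂ) ^ 2‖ ^ 2 := by
          gcongr; exact Complex.norm_exp_sub_one_sub_id_le hn.le
      _ = ‖θ‖ * ‖θ / (n : ℂ) ^ 2‖ := by
          rw [norm_div, norm_pow, Complex.norm_natCast]; field_simp
  have := hrem.add_const θ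
  rw [zero_add] at this
  refine this.congr' ?_
  filter_upwards [eventually_gt_atTop 0] with n hn
  have hn' : (n : ℂ) ≠ 0 := by exact_mod_cast hn.ne'
  field_simp
  ring

lemma card_Pr_le (n : ℕ) : (Fintype.card (Pr n) : ℝ) ≤ (n : ℝ) ^ 2 := by
  have : Fintype.card (Pr n) ≤ Fintype.card (Fin n × Fin n) := Fintype.card_subtype_le _
  rw [Fintype.card_prod, Fintype.card_fin] at this
  rw [sq]
  exact_mod_cast this

theorem charlim {κ q β : ℝ} (h0 : 0 ≤ κ) (h1 : κ ≤ 1) (hq : 0 ≤ q) (hβ0 : 0 ≤ β) (hβ1 : β ≤ 1)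
    {b be : ℕ → Fin 3 → ℝ}
    (hb : ∀ᶠ n in atTop, ∀ k, b n k ∈ Set.Icc (0:ℝ) 1)
    (hbe : ∀ᶠ n in atTop, ∀ k, be n k ∈ Set.Icc (0:ℝ) 1)
    (hbl : ∀ k, Tendsto (fun n => b n k) atTop (nhds q))
    (hbel : ∀ k, Tendsto (fun n => be n k) atTop (nhds β)) (u v : Fin 3 → ℝ) :
    Tendsto (fun n => ∫ e, Complex.exp ((Xst (be n) u v e : ℂ) * Complex.I) ∂(nu κ (b n) (be n) n))
      atTop (nhds (Complex.exp (∑ k, theta q β (u k) (v k) * (rho κ k : ℂ)))) := by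
  set θ : Fin 3 → ℂ := fun k => theta q β (u k) (v k) with hθ
  have hθre : ∀ k, (θ k).re ≤ 0 := fun k => theta_re _ _ _ _ hq hβ0 hβ1
  set G : ℝ → ℂ := fun x => Complex.exp (∑ k, θ k * (rho x k : ℂ)) with hG
  have hGc : Continuous G := by
    simp only [hG, Fin.sum_univ_three, rho]
    simp only [Matrix.cons_val_zero, Matrix.cons_val_one, Matrix.cons_val]
    fun_prop
  have hGn : ∀ x ∈ Set.Icc (0:ℝ) 1, ‖G x‖ ≤ 1 := by
    intro x hx
    simp only [hG]
    rw [Complex.norm_exp, Real.exp_le_one_iff, Complex.re_sum]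
    refine Finset.sum_nonpos fun k _ => ?_
    rw [Complex.re_mul_ofReal]
    refine mul_nonpos_of_nonpos_of_nonneg (hθre k) ?_
    have h2 : 0 ≤ 1 - x := by linarith [hx.2]
    have h3 := hx.1
    fin_cases k <;> simp [rho] <;> positivity
  have hmain := label_lim h0 h1 G hGc
  -- the error terms
  set ε1 : ℕ → ℝ := fun n => ∑ k, ‖(n : ℂ) ^ 2 * (chi (b n k) (be n k) (u k) (v k) n - 1)
    - (n : ℂ) ^ 2 * (Complex.exp (θ k / (n : ℂ) ^ 2) - 1)‖ with hε1
  have hlimA : Tendsto ε1 atTop (nhds 0) := by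
    have : ∀ k ∈ (Finset.univ : Finset (Fin 3)), Tendsto (fun n : ℕ =>
        ‖(n : ℂ) ^ 2 * (chi (b n k) (be n k) (u k) (v k) n - 1)
        - (n : ℂ) ^ 2 * (Complex.exp (θ k / (n : ℂ) ^ 2) - 1)‖) atTop (nhds 0) := by
      intro k _
      have := ((chi_lim (fun n => b n k) (fun n => be n k) q β (u k) (v k) (hbl k)
        (hbel k)).sub (exp_lim2 (θ k))).norm
      simpa [hθ] using this
    simpa using tendsto_finsetSum Finset.univ this
  set ε2 : ℕ → ℝ := fun n => 2 * ((‖θ 1‖ + ‖θ 2‖) * (n : ℝ)⁻¹) with hε2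
  have hinv : Tendsto (fun n : ℕ => ((n : ℝ))⁻¹) atTop (nhds 0) :=
    tendsto_inv_atTop_nhds_zero_nat
  have hlimB : Tendsto ε2 atTop (nhds 0) := by
    simpa using (hinv.const_mul (‖θ 1‖ + ‖θ 2‖)).const_mul 2
  have hsmall : ∀ᶠ n : ℕ in atTop, (‖θ 1‖ + ‖θ 2‖) * (n : ℝ)⁻¹ < 1 := by
    have := hinv.const_mul (‖θ 1‖ + ‖θ 2‖)
    rw [mul_zero] at this
    exact this.eventually_lt_const one_pos
  have hdiff : Tendsto (fun n : ℕ =>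
      (∫ e, Complex.exp ((Xst (be n) u v e : ℂ) * Complex.I) ∂(nu κ (b n) (be n) n))
      - ∑ l : Fin n → Bool, (labelMass κ l : ℂ) * G ((cnt l : ℝ) / n)) atTop (nhds 0) := by
    have hs : Tendsto (fun n => ε1 n + ε2 n) atTop (nhds 0) := by
      simpa using hlimA.add hlimB
    refine squeeze_zero_norm' ?_ hs
    filter_upwards [hb, hbe, eventually_gt_atTop 0, hsmall] with n hbn hben hn hsm
    have hn' : (0:ℝ) < n := by positivity
    have hnc : (n : ℂ) ≠ 0 := by exact_mod_cast hn.ne'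
    rw [char_formula h0 h1 hbn hben, ← Finset.sum_sub_distrib]
    have hkey : ∀ l : Fin n → Bool,
        ‖∏ p : Pr n, chi (b n (pcl l p)) (be n (pcl l p)) (u (pcl l p)) (v (pcl l p)) n
          - G ((cnt l : ℝ) / n)‖ ≤ ε1 n + ε2 n := by
      intro l
      have hA : ‖∏ p : Pr n, chi (b n (pcl l p)) (be n (pcl l p)) (u (pcl l p)) (v (pcl l p)) n
          - ∏ p : Pr n, Complex.exp (θ (pcl l p) / (n : ℂ) ^ 2)‖ ≤ ε1 n := by
        refine (prod_diff _ _ _ (fun p => chi_norm (hbn _) (hben _) _ _ _) (fun p => ?_)).trans ?_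
        · rw [Complex.norm_exp, Real.exp_le_one_iff]
          have : θ (pcl l p) / (n : ℂ) ^ 2 = θ (pcl l p) * (((n : ℝ) ^ 2)⁻¹ : ℝ) := by
            push_cast; rw [div_eq_mul_inv]
          rw [this, Complex.re_mul_ofReal]
          exact mul_nonpos_of_nonpos_of_nonneg (hθre _) (by positivity)
        · have hk : ∀ k, ‖chi (b n k) (be n k) (u k) (v k) n - Complex.exp (θ k / (n : ℂ) ^ 2)‖
              ≤ ε1 n / (n : ℝ) ^ 2 := by
            intro k
            rw [le_div_iff₀ (by positivity)]
            have h5 : ‖chi (b n k) (be n k) (u k) (v k) n - Complex.exp (θ k / (n : ℂ) ^ 2)‖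
                * (n : ℝ) ^ 2 = ‖(n : ℂ) ^ 2 * (chi (b n k) (be n k) (u k) (v k) n - 1)
                - (n : ℂ) ^ 2 * (Complex.exp (θ k / (n : ℂ) ^ 2) - 1)‖ := by
              rw [← mul_sub, norm_mul, norm_pow, Complex.norm_natCast, mul_comm]
              congr 2; ring
            rw [h5]
            exact Finset.single_le_sum (f := fun k =>
              ‖(n : ℂ) ^ 2 * (chi (b n k) (be n k) (u k) (v k) n - 1)
                - (n : ℂ) ^ 2 * (Complex.exp (θ k / (n : ℂ) ^ 2) - 1)‖)
              (fun _ _ => norm_nonneg _) (Finset.mem_univ k)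
          have he0 : 0 ≤ ε1 n := Finset.sum_nonneg fun _ _ => norm_nonneg _
          calc _ ≤ ∑ _p : Pr n, ε1 n / (n : ℝ) ^ 2 := Finset.sum_le_sum fun p _ => hk _
            _ = Fintype.card (Pr n) * (ε1 n / (n : ℝ) ^ 2) := by simp
            _ ≤ (n : ℝ) ^ 2 * (ε1 n / (n : ℝ) ^ 2) := by
              gcongr; exact card_Pr_le n
            _ = ε1 n := by field_simp
      set x : ℝ := (cnt l : ℝ) / n with hx
      have hxI : x ∈ Set.Icc (0:ℝ) 1 := by
        refine ⟨by positivity, ?_⟩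
        rw [hx, div_le_one hn']
        exact_mod_cast cnt_le l
      set z : ℂ := -(θ 1 * x + θ 2 * (1 - x)) / (2 * n) with hz
      have hB : ∏ p : Pr n, Complex.exp (θ (pcl l p) / (n : ℂ) ^ 2) = G x * Complex.exp z := by
        rw [← Complex.exp_sum, ← Finset.sum_div, pair_sum]
        simp only [hG]
        rw [← Complex.exp_add]
        congr 1
        have hc : (cnt l : ℂ) = x * n := by
          rw [hx]; push_cast; field_simp
        simp only [Fin.sum_univ_three, rho, hz, hc]
        simp only [Matrix.cons_val_zero, Matrix.cons_val_one, Matrix.cons_val]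
        push_cast
        field_simp
        ring
      have hzn : ‖z‖ ≤ (‖θ 1‖ + ‖θ 2‖) * (n : ℝ)⁻¹ := by
        rw [hz, norm_div, norm_neg]
        have h6 : ‖θ 1 * x + θ 2 * (1 - x)‖ ≤ ‖θ 1‖ + ‖θ 2‖ := by
          refine (norm_add_le _ _).trans ?_
          rw [norm_mul, norm_mul]
          have e1 : ‖(x : ℂ)‖ ≤ 1 := by
            rw [Complex.norm_real, Real.norm_eq_abs, abs_of_nonneg hxI.1]; exact hxI.2
          have e2 : ‖(1 - x : ℂ)‖ ≤ 1 := by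
            rw [← Complex.ofReal_one, ← Complex.ofReal_sub, Complex.norm_real, Real.norm_eq_abs,
              abs_of_nonneg (by linarith [hxI.2])]
            linarith [hxI.1]
          have := mul_le_mul_of_nonneg_left e1 (norm_nonneg (θ 1))
          have := mul_le_mul_of_nonneg_left e2 (norm_nonneg (θ 2))
          linarith
        rw [norm_mul, Complex.norm_natCast, div_eq_mul_inv]
        have h7 : (‖(2:ℂ)‖ * (n : ℝ))⁻¹ ≤ (n : ℝ)⁻¹ := by
          apply inv_anti₀ hn'
          simp
          linarith
        exact mul_le_mul h6 h7 (by positivity) (by positivity)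
      have hC : ‖G x * Complex.exp z - G x‖ ≤ ε2 n := by
        have : G x * Complex.exp z - G x = G x * (Complex.exp z - 1) := by ring
        rw [this, norm_mul]
        have h8 := Complex.norm_exp_sub_one_le (hzn.trans hsm.le)
        calc ‖G x‖ * ‖Complex.exp z - 1‖ ≤ 1 * (2 * ‖z‖) := by
              gcongr; exact hGn x hxI
          _ ≤ ε2 n := by rw [one_mul, hε2]; dsimp only; gcongr
      rw [hB] at hA
      have := norm_add_le (∏ p : Pr n, chi (b n (pcl l p)) (be n (pcl l p)) (u (pcl l p))
        (v (pcl l p)) n - G x * Complex.exp z) (G x * Complex.exp z - G x)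
      rw [sub_add_sub_cancel] at this
      linarith
    calc _ ≤ ∑ l : Fin n → Bool, labelMass κ l * (ε1 n + ε2 n) := by
          refine (norm_sum_le _ _).trans (Finset.sum_le_sum fun l _ => ?_)
          rw [← mul_sub, norm_mul, Complex.norm_real, Real.norm_eq_abs,
            abs_of_nonneg (labelMass_nonneg h0 h1 l)]
          exact mul_le_mul_of_nonneg_left (hkey l) (labelMass_nonneg h0 h1 l)
      _ = ε1 n + ε2 n := by rw [← Finset.sum_mul, labelMass_sum, one_mul]
  have := hdiff.add hmain
  simpa using this

lemma Xst_smul (be u v : Fin 3 → ℝ) {n : ℕ} (s : ℝ) (e : Cfg n) :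
    s * Xst be u v e = Xst be (fun k => s * u k) (fun k => s * v k) e := by
  unfold Xst
  rw [Finset.mul_sum]
  exact Finset.sum_congr rfl fun p _ => by ring

/-- Assumptions on the parameter sequences. -/
structure Par (κ q β : ℝ) (b be : ℕ → Fin 3 → ℝ) : Prop where
  k0 : 0 < κ
  k1 : κ < 1
  q0 : 0 < q
  b0 : 0 < β
  b1 : β < 1
  hb : ∀ᶠ n in atTop, ∀ k, b n k ∈ Set.Icc (0:ℝ) 1
  hbe : ∀ᶠ n in atTop, ∀ k, be n k ∈ Set.Icc (0:ℝ) 1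
  hbl : ∀ k, Tendsto (fun n => b n k) atTop (nhds q)
  hbel : ∀ k, Tendsto (fun n => be n k) atTop (nhds β)

section main
variable {κ q β : ℝ} {b be : ℕ → Fin 3 → ℝ}

lemma Par.prob (h : Par κ q β b be) :
    ∀ᶠ n in atTop, IsProbabilityMeasure (nu κ (b n) (be n) n) := by
  filter_upwards [h.hb, h.hbe] with n h1 h2
  exact nu_prob h.k0.le h.k1.le h1 h2

lemma Par.rho_pos (h : Par κ q β b be) (k : Fin 3) : 0 < rho κ k := by
  have h1 := h.k0
  have h2 : 0 < 1 - κ := by linarith [h.k1]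
  fin_cases k <;> simp [rho] <;> positivity

lemma Par.charFun (h : Par κ q β b be) (u v : Fin 3 → ℝ) (s : ℝ) :
    Tendsto (fun n => charFun ((nu κ (b n) (be n) n).map (Xst (be n) u v)) s) atTop
      (nhds (Complex.exp (∑ k, theta q β (s * u k) (s * v k) * (rho κ k : ℂ)))) := by
  have := charlim h.k0.le h.k1.le h.q0.le h.b0.le h.b1.le h.hb h.hbe h.hbl h.hbel
    (fun k => s * u k) (fun k => s * v k)
  refine this.congr fun n => ?_
  rw [charFun_apply_real, integral_map (measurable_of_finite _).aemeasurable
    (by fun_prop)]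
  refine integral_congr_ae (ae_of_all _ fun e => ?_)
  simp only
  rw [← Xst_smul]
  push_cast
  rfl

lemma Par.mapProb (h : Par κ q β b be) (u v : Fin 3 → ℝ) :
    ∀ᶠ n in atTop, IsProbabilityMeasure ((nu κ (b n) (be n) n).map (Xst (be n) u v)) := by
  filter_upwards [h.prob] with n hn
  exact Measure.isProbabilityMeasure_map (measurable_of_finite _).aemeasurable

def sig (κ q β : ℝ) (u : Fin 3 → ℝ) : ℝ := ∑ k, u k ^ 2 * (q * β * (1 - β) / 2) * rho κ k

lemma Par.gauss (h : Par κ q β b be) (u : Fin 3 → ℝ) (hs : 0 < sig κ q β u) (x : ℝ) :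
    Tendsto (fun n => (nu κ (b n) (be n) n).real {e | Xst (be n) u 0 e ≤ x}) atTop
      (nhds (gF (sig κ q β u).toNNReal x)) := by
  have hl := levy_gauss _ (h.mapProb u 0) (sig κ q β u).toNNReal (by simpa using hs)
    (fun t => by
      refine (h.charFun u 0 t).congr' (Eventually.of_forall fun _ => rfl) |>.trans (le_of_eq ?_)
      congr 2
      rw [Real.coe_toNNReal _ hs.le]
      simp only [theta, sig, Fin.sum_univ_three, Pi.zero_apply]
      push_cast
      ring) x
  refine hl.congr fun n => ?_
  rw [map_measureReal_apply (measurable_of_finite _) measurableSet_Iic]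
  rfl

lemma Par.const (h : Par κ q β b be) (v : Fin 3 → ℝ) :
    TP (fun n => nu κ (b n) (be n) n)
      (fun n e => Xst (be n) 0 v e - ∑ k, v k * (q * (1 - β)) * rho κ k) := by
  intro ε hε
  have hl := levy_const _ (h.mapProb 0 v) (∑ k, v k * (q * (1 - β)) * rho κ k)
    (fun t => by
      refine (h.charFun 0 v t).congr' (Eventually.of_forall fun _ => rfl) |>.trans (le_of_eq ?_)
      congr 2
      simp only [theta, Fin.sum_univ_three, Pi.zero_apply]
      push_cast
      ring) ε hε
  refine hl.congr fun n => ?_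
  rw [map_measureReal_apply (measurable_of_finite _)
    (measurableSet_le measurable_const (by fun_prop))]
  rfl

def Mk {n : ℕ} (k : Fin 3) (e : Cfg n) : ℝ := ∑ p : Pr n, if pcl e.1 p = k then wM (e.2 p) else 0
def Dk {n : ℕ} (k : Fin 3) (e : Cfg n) : ℝ := ∑ p : Pr n, if pcl e.1 p = k then wD (e.2 p) else 0

lemma Xst_M {n : ℕ} (be : Fin 3 → ℝ) (k : Fin 3) (e : Cfg n) :
    Xst be 0 (Pi.single k 1) e = Mk k e / (n : ℝ) ^ 2 := by
  unfold Xst Mk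
  rw [Finset.sum_div]
  refine Finset.sum_congr rfl fun p _ => ?_
  by_cases hk : pcl e.1 p = k
  · subst hk; simp
  · simp [hk]

lemma Xst_S {n : ℕ} (be : Fin 3 → ℝ) (k : Fin 3) (e : Cfg n) :
    Xst be (Pi.single k 1) 0 e = (Dk k e / 2 - be k * Mk k e) / n := by
  unfold Xst Mk Dk
  rw [Finset.sum_div, Finset.mul_sum, ← Finset.sum_sub_distrib, Finset.sum_div]
  refine Finset.sum_congr rfl fun p _ => ?_
  by_cases hk : pcl e.1 p = k
  · subst hk; simp [wS]
  · simp [hk]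

lemma Xst_lin {n : ℕ} (be u : Fin 3 → ℝ) (e : Cfg n) :
    Xst be u 0 e = ∑ k, u k * Xst be (Pi.single k 1) 0 e := by
  unfold Xst
  simp_rw [Finset.mul_sum]
  rw [Finset.sum_comm]
  refine Finset.sum_congr rfl fun p _ => ?_
  rw [Finset.sum_eq_single (pcl e.1 p)]
  · simp; ring
  · intro k _ hk
    simp [hk.symm]
  · simp

/-- Normalised estimator for one class. -/
def Zk {n : ℕ} (be : Fin 3 → ℝ) (k : Fin 3) (e : Cfg n) : ℝ :=
  n * (Dk k e / (2 * Mk k e) - be k)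

lemma Par.main (h : Par κ q β b be) (a : Fin 3 → ℝ)
    (hs : 0 < sig κ q β (fun k => a k / (q * (1 - β) * rho κ k))) (x : ℝ) :
    Tendsto (fun n => (nu κ (b n) (be n) n).real {e | ∑ k, a k * Zk (be n) k e ≤ x}) atTop
      (nhds (gF (sig κ q β (fun k => a k / (q * (1 - β) * rho κ k))).toNNReal x)) := by
  have hβ : 0 < 1 - β := by linarith [h.b1]
  have hq := h.q0
  have hb0 := h.b0
  have hr := h.rho_pos
  have hk : ∀ k, TP (fun n => nu κ (b n) (be n) n) (fun n e => a k * (Zk (be n) k e -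
      Xst (be n) (Pi.single k 1) 0 e / (q * (1 - β) * rho κ k))) := by
    intro k
    have hrk := hr k
    have hsk : 0 < sig κ q β (Pi.single k 1) := by
      unfold sig
      rw [Finset.sum_eq_single k]
      · simp only [Pi.single_eq_same]; positivity
      · intro j _ hj; simp [hj]
      · simp
    refine TP.ratio h.prob (BP_of_gauss h.prob (h.gauss _ hsk)
      (fun n x => (Set.toFinite _).measurableSet)) (by positivity)
      (V := fun n e => Xst (be n) 0 (Pi.single k 1) e) ?_ ?_ (a k)
    · have := h.const (Pi.single k 1)
      rw [Finset.sum_eq_single k] at this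
      · simpa using this
      · intro j _ hj; simp [hj]
      · simp
    · filter_upwards [eventually_gt_atTop 0] with n hn e he
      rw [Xst_M] at he ⊢
      have hn' : (n : ℝ) ≠ 0 := by positivity
      have hM : Mk k e ≠ 0 := fun h0 => he (by simp [h0])
      rw [Xst_S]
      unfold Zk
      field_simp
  have hT := (TP.add h.prob (TP.add h.prob (hk 0) (hk 1)) (hk 2))
  refine slutsky h.prob (gF_cont _ (by simpa using hs)) (h.gauss _ hs) ?_ x
  convert hT using 3 with n e
  rw [Xst_lin]
  simp only [Fin.sum_univ_three]
  ring

end main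

lemma pairCard_eq {n : ℕ} (sel : Fin n → Fin n → Bool) :
    pairCard sel = ∑ p : Pr n, if sel p.1.1 p.1.2 = true then (1:ℝ) else 0 := by
  unfold pairCard
  rw [← sum_pairs (fun p => if sel p.1 p.2 = true then (1:ℝ) else 0), ← Finset.sum_filter,
    Finset.filter_filter]
  simp

lemma betaHat_eq {Ω : Type*} {n : ℕ} (c : Ω → Fin n → Bool) (A Y Y' : Ω → Fin n → Fin n → Bool)
    (ω : Ω) (cls : Fin n → Fin n → Bool) (k : Fin 3)
    (hc : ∀ i j, cls i j = true ↔ cl (c ω i) (c ω j) = k) :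
    betaHat cls (Y ω) (Y' ω) = Dk k (Phi c A Y Y' ω) / (2 * Mk k (Phi c A Y Y' ω)) := by
  have hM : pairCard (fun i j => cls i j && Y ω i j) = Mk k (Phi c A Y Y' ω) := by
    rw [pairCard_eq]
    unfold Mk
    refine Finset.sum_congr rfl fun p _ => ?_
    simp only [Bool.and_eq_true, hc, Phi, pcl, wM]
    split_ifs <;> simp_all
  have hD : pairCard (fun i j => cls i j && (Y ω i j != Y' ω i j)) = Dk k (Phi c A Y Y' ω) := by
    rw [pairCard_eq]
    unfold Dk
    refine Finset.sum_congr rfl fun p _ => ?_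
    simp only [Bool.and_eq_true, hc, Phi, pcl, wD]
    split_ifs <;> simp_all
  unfold betaHat u1hat u2hat
  rw [hM, hD]
  by_cases h0 : pairCard cls = 0
  · have hD0 : Dk k (Phi c A Y Y' ω) = 0 := by
      rw [← hD]
      unfold pairCard at h0 ⊢
      rw [Nat.cast_eq_zero, Finset.card_eq_zero, Finset.filter_eq_empty_iff] at h0 ⊢
      intro p hp hh
      simp only [Bool.and_eq_true] at hh
      exact h0 hp ⟨hh.1, hh.2.1⟩
    rw [hD0]; simp
  · by_cases h1 : Mk k (Phi c A Y Y' ω) = 0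
    · rw [h1]; simp
    · field_simp

def av (t : Fin 3 → ℝ) : Fin 3 → ℝ := ![t 0 + t 1 + t 2, - t 1, - t 2]

lemma expr_eq {Ω : Type*} {n : ℕ} (hn : 0 < n) (c : Ω → Fin n → Bool)
    (A Y Y' : Ω → Fin n → Fin n → Bool) (ω : Ω) (t : Fin 3 → ℝ) (β γ₁ γ₂ : ℝ) :
    t 0 * ((n : ℝ) * (betaHat (between (c ω)) (Y ω) (Y' ω) - β))
      + t 1 * (Real.sqrt n * (gammaHat1 (c ω) (Y ω) (Y' ω) - γ₁))
      + t 2 * (Real.sqrt n * (gammaHat2 (c ω) (Y ω) (Y' ω) - γ₂)) =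
    ∑ k, av t k * Zk ![β, β - γ₁ / Real.sqrt n, β - γ₂ / Real.sqrt n] k (Phi c A Y Y' ω) := by
  unfold gammaHat1 gammaHat2
  rw [betaHat_eq c A Y Y' ω (between (c ω)) 0
      (by intro i j; unfold between cl; cases c ω i <;> cases c ω j <;> simp),
    betaHat_eq c A Y Y' ω (within1 (c ω)) 1
      (by intro i j; unfold within1 cl; cases c ω i <;> cases c ω j <;> simp),
    betaHat_eq c A Y Y' ω (within2 (c ω)) 2
      (by intro i j; unfold within2 cl; cases c ω i <;> cases c ω j <;> simp)]
  have hn' : (0:ℝ) < n := by exact_mod_cast hn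
  have hs : 0 < Real.sqrt n := Real.sqrt_pos.2 hn'
  have hss : (n : ℝ) = Real.sqrt n * Real.sqrt n := (Real.mul_self_sqrt hn'.le).symm
  simp only [Fin.sum_univ_three, Zk, av, Matrix.cons_val_zero, Matrix.cons_val_one,
    Matrix.cons_val]
  generalize Dk 0 _ / _ = x
  generalize Dk 1 _ / _ = y
  generalize Dk 2 _ / _ = z
  generalize Real.sqrt n = s at *
  rw [hss]
  field_simp
  ring

lemma ev_eq {Ω : Type*} [MeasurableSpace Ω] {P : Measure Ω} {n : ℕ} {B βm : Bool → Bool → ℝ}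
    {κ : ℝ} {c : Ω → Fin n → Bool} {A Y Y' : Ω → Fin n → Fin n → Bool}
    (h : IsObsSBM P n B βm κ c A Y Y') :
    {ω | Y ω ≠ Y' ω} = Phi c A Y Y' ⁻¹' {e | ∃ p, (e.2 p).2.1 ≠ (e.2 p).2.2} := by
  ext ω
  have h1 := eq_matOf_iff (Y ω) (h.symmY ω) (h.looplessY ω) (fun p => Y' ω p.1.1 p.1.2)
  have h2 := (eq_matOf_iff (Y' ω) (h.symmY' ω) (h.looplessY' ω)
    (fun p => Y' ω p.1.1 p.1.2)).2 (fun p => rfl)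
  rw [← h2] at h1
  change ¬ (Y ω = Y' ω) ↔ ∃ p : Pr n, ¬ (Y ω p.1.1 p.1.2 = Y' ω p.1.1 p.1.2)
  rw [h1, not_forall]

lemma par_mk {κ q β μ₁ μ₂ γ₁ γ₂ : ℝ}
    (hκ0 : 0 < κ) (hκ1 : κ < 1) (hq0 : 0 < q) (hq1 : q < 1) (hβ0 : 0 < β) (hβ1 : β < 1) :
    Par κ q β (fun n => ![q, q + μ₁ / Real.sqrt n, q + μ₂ / Real.sqrt n])
      (fun n => ![β, β - γ₁ / Real.sqrt n, β - γ₂ / Real.sqrt n]) := by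
  have hz : ∀ m : ℝ, Tendsto (fun n : ℕ => m / Real.sqrt n) atTop (nhds 0) := fun m =>
    (Real.tendsto_sqrt_atTop.comp tendsto_natCast_atTop_atTop).const_div_atTop m
  have hbl : ∀ k : Fin 3, Tendsto (fun n : ℕ => (![q, q + μ₁ / Real.sqrt n,
      q + μ₂ / Real.sqrt n] : Fin 3 → ℝ) k) atTop (nhds q) := by
    intro k
    fin_cases k
    · exact tendsto_const_nhds
    · simpa using (hz μ₁).const_add q
    · simpa using (hz μ₂).const_add q
  have hbel : ∀ k : Fin 3, Tendsto (fun n : ℕ => (![β, β - γ₁ / Real.sqrt n,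
      β - γ₂ / Real.sqrt n] : Fin 3 → ℝ) k) atTop (nhds β) := by
    intro k
    fin_cases k
    · exact tendsto_const_nhds
    · simpa using (hz γ₁).const_sub β
    · simpa using (hz γ₂).const_sub β
  refine ⟨hκ0, hκ1, hq0, hβ0, hβ1, ?_, ?_, hbl, hbel⟩
  · exact eventually_all.2 fun k => (hbl k).eventually (Icc_mem_nhds hq0 hq1)
  · exact eventually_all.2 fun k => (hbel k).eventually (Icc_mem_nhds hβ0 hβ1)

section main2
variable {κ q β : ℝ} {b be : ℕ → Fin 3 → ℝ}

/-- Asymptotic variance contributions. -/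
def vk (κ q β : ℝ) (k : Fin 3) : ℝ := β / (2 * (q * (1 - β)) * rho κ k)

lemma Par.vk_pos (h : Par κ q β b be) (k : Fin 3) : 0 < vk κ q β k := by
  have hβ : 0 < 1 - β := by linarith [h.b1]
  have hq := h.q0
  have hb0 := h.b0
  have hr := h.rho_pos k
  unfold vk; positivity

lemma Par.sig_eq (h : Par κ q β b be) (a : Fin 3 → ℝ) :
    sig κ q β (fun k => a k / (q * (1 - β) * rho κ k)) = ∑ k, a k ^ 2 * vk κ q β k := by
  have hβ : 0 < 1 - β := by linarith [h.b1]
  have hq := h.q0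
  unfold sig
  refine Finset.sum_congr rfl fun k _ => ?_
  have hr := h.rho_pos k
  unfold vk
  field_simp

lemma Par.same (h : Par κ q β b be) (hb0 : ∀ n, be n 0 = β) :
    Tendsto (fun n => (nu κ (b n) (be n) n).real {e | ¬ ∃ p, (e.2 p).2.1 ≠ (e.2 p).2.2}) atTop
      (nhds 0) := by
  have hs : 0 < sig κ q β (fun k => (Pi.single 0 1 : Fin 3 → ℝ) k / (q * (1 - β) * rho κ k)) := by
    rw [h.sig_eq, Finset.sum_eq_single 0]
    · simpa using h.vk_pos 0
    · intro j _ hj; simp [hj]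
    · simp
  have hm := h.main _ hs
  set v := (sig κ q β (fun k => (Pi.single 0 1 : Fin 3 → ℝ) k / (q * (1 - β) * rho κ k))).toNNReal
  rw [Metric.tendsto_nhds]
  intro ε hε
  obtain ⟨K, hK⟩ := ((gF_bot v).eventually_lt_const hε).exists
  have hn : Tendsto (fun n : ℕ => -((n : ℝ) * β)) atTop atBot :=
    tendsto_neg_atTop_atBot.comp (tendsto_natCast_atTop_atTop.atTop_mul_const h.b0)
  filter_upwards [(hm K).eventually_lt_const hK, h.prob, hn.eventually_le_atBot K]
    with n h1 h2 h3
  rw [Real.dist_eq, sub_zero, abs_of_nonneg measureReal_nonneg]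
  refine lt_of_le_of_lt (measureReal_mono ?_) h1
  intro e he
  simp only [Set.mem_ofPred_eq, not_exists, not_not] at he ⊢
  rw [Finset.sum_eq_single 0]
  · have : Dk 0 e = 0 := by
      unfold Dk
      refine Finset.sum_eq_zero fun p _ => ?_
      simp [wD, he p]
    simp only [Zk, this, Pi.single_eq_same, hb0]
    rw [zero_div]; linarith
  · intro j _ hj; simp [hj]
  · simp

end main2

lemma quad_eq (v0 v1 v2 : ℝ) (t : Fin 3 → ℝ) :
    quadForm3 !![v0, v0, v0; v0, v0 + v1, v0; v0, v0, v0 + v2] t =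
      (t 0 + t 1 + t 2) ^ 2 * v0 + t 1 ^ 2 * v1 + t 2 ^ 2 * v2 := by
  simp [quadForm3, Fin.sum_univ_three]
  ring

lemma quad_pos {v0 v1 v2 : ℝ} (h0 : 0 < v0) (h1 : 0 < v1) (h2 : 0 < v2) {t : Fin 3 → ℝ}
    (ht : t ≠ 0) : 0 < (t 0 + t 1 + t 2) ^ 2 * v0 + t 1 ^ 2 * v1 + t 2 ^ 2 * v2 := by
  by_cases e1 : t 1 = 0
  · by_cases e2 : t 2 = 0
    · have e0 : t 0 ≠ 0 := by
        intro e0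
        apply ht
        funext k
        fin_cases k <;> simp [e0, e1, e2]
      rw [e1, e2]
      have := sq_pos_of_ne_zero e0
      simp; positivity
    · have := sq_pos_of_ne_zero e2
      positivity
  · have := sq_pos_of_ne_zero e1
    positivity

lemma quad_posDef {v0 v1 v2 : ℝ} (h0 : 0 < v0) (h1 : 0 < v1) (h2 : 0 < v2) :
    (!![v0, v0, v0; v0, v0 + v1, v0; v0, v0, v0 + v2] : Matrix (Fin 3) (Fin 3) ℝ).PosDef := by
  refine Matrix.PosDef.of_dotProduct_mulVec_pos ?_ ?_
  · ext i j
    fin_cases i <;> fin_cases j <;> simp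
  · intro t ht
    have := quad_pos h0 h1 h2 ht
    rw [← quad_eq] at this
    refine lt_of_lt_of_eq this ?_
    simp only [quadForm3, dotProduct, Matrix.mulVec, Finset.mul_sum, star_trivial]
    exact Finset.sum_congr rfl fun i _ => Finset.sum_congr rfl fun j _ => mul_assoc _ _ _

lemma cond_real {Ω : Type*} [MeasurableSpace Ω] (P : Measure Ω) (s S : Set Ω)
    (hs : NullMeasurableSet s P) : (ProbabilityTheory.cond P s S).toReal =
      (P.real s)⁻¹ * P.real (S ∩ s) := by
  unfold ProbabilityTheory.cond
  rw [Measure.smul_apply, Measure.restrict_apply₀' hs, smul_eq_mul, ENNReal.toReal_mul,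
    ENNReal.toReal_inv]
  rfl

theorem statement_13
    (κ q β μ₁ μ₂ γ₁ γ₂ : ℝ)
    (hκ0 : 0 < κ) (hκ1 : κ < 1) (hq0 : 0 < q) (hq1 : q < 1)
    (hβ0 : 0 < β) (hβ1 : β < 1)
    (Ω : ℕ → Type) [mΩ : ∀ n, MeasurableSpace (Ω n)] (P : ∀ n, Measure (Ω n))
    (c : ∀ n, Ω n → Fin n → Bool)
    (A Y Y' : ∀ n, Ω n → Fin n → Fin n → Bool)
    (hmodel : ∀ᶠ n : ℕ in atTop,
      IsObsSBM (P n) n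
        (sbmB (q + μ₁ / Real.sqrt n) (q + μ₂ / Real.sqrt n) q)
        (sbmB (β - γ₁ / Real.sqrt n) (β - γ₂ / Real.sqrt n) β)
        κ (c n) (A n) (Y n) (Y' n)) :
    ∃ SigmaB : Matrix (Fin 3) (Fin 3) ℝ, SigmaB.PosDef ∧
      ∀ t : Fin 3 → ℝ, t ≠ 0 → ∀ x : ℝ,
        Tendsto (fun n =>
            ((ProbabilityTheory.cond (P n) {ω | Y n ω ≠ Y' n ω})
              {ω | t 0 * ((n : ℝ) *
                    (betaHat (between (c n ω)) (Y n ω) (Y' n ω) - β))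
                + t 1 * (Real.sqrt n *
                    (gammaHat1 (c n ω) (Y n ω) (Y' n ω) - γ₁))
                + t 2 * (Real.sqrt n *
                    (gammaHat2 (c n ω) (Y n ω) (Y' n ω) - γ₂)) ≤ x}).toReal)
          atTop
          (nhds ((gaussianReal 0 (Real.toNNReal (quadForm3 SigmaB t))
            (Set.Iic x)).toReal)) := by
  have hpar := par_mk (μ₁ := μ₁) (μ₂ := μ₂) (γ₁ := γ₁) (γ₂ := γ₂) hκ0 hκ1 hq0 hq1 hβ0 hβ1
  have h0 := hpar.vk_pos 0
  have h1 := hpar.vk_pos 1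
  have h2 := hpar.vk_pos 2
  refine ⟨_, quad_posDef h0 h1 h2, fun t ht x => ?_⟩
  have hq : quadForm3 _ t = _ := quad_eq (vk κ q β 0) (vk κ q β 1) (vk κ q β 2) t
  have hsig : sig κ q β (fun k => av t k / (q * (1 - β) * rho κ k)) =
      quadForm3 !![vk κ q β 0, vk κ q β 0, vk κ q β 0; vk κ q β 0, vk κ q β 0 + vk κ q β 1,
        vk κ q β 0; vk κ q β 0, vk κ q β 0, vk κ q β 0 + vk κ q β 2] t := by
    rw [hpar.sig_eq, hq]
    simp [Fin.sum_univ_three, av]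
  have hpos : 0 < sig κ q β (fun k => av t k / (q * (1 - β) * rho κ k)) := by
    rw [hsig, hq]
    exact quad_pos h0 h1 h2 ht
  have hmain := hpar.main (av t) hpos x
  have hsame := hpar.same (fun n => rfl)
  rw [hsig] at hmain
  change Tendsto _ _ (nhds (gF _ x))
  generalize gF _ x = G at hmain ⊢
  generalize hgam : (fun n : ℕ => nu κ ![q, q + μ₁ / Real.sqrt n, q + μ₂ / Real.sqrt n]
    ![β, β - γ₁ / Real.sqrt n, β - γ₂ / Real.sqrt n] n) = ν
  have hν : ∀ n : ℕ, nu κ ![q, q + μ₁ / Real.sqrt n, q + μ₂ / Real.sqrt n]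
    ![β, β - γ₁ / Real.sqrt n, β - γ₂ / Real.sqrt n] n = ν n := fun n => congrFun hgam n
  have hprob := hpar.prob
  simp only [hν] at hmain hsame hprob
  set T : ∀ n : ℕ, Set (Cfg n) := fun n => {e | ∑ k, av t k *
    Zk ![β, β - γ₁ / Real.sqrt n, β - γ₂ / Real.sqrt n] k e ≤ x} with hT
  set E : ∀ n : ℕ, Set (Cfg n) := fun n => {e | ∃ p, (e.2 p).2.1 ≠ (e.2 p).2.2} with hE
  have hEc : ∀ᶠ n in atTop, (ν n).real {e | ¬ ∃ p, (e.2 p).2.1 ≠ (e.2 p).2.2}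
      = 1 - (ν n).real (E n) := by
    filter_upwards [hprob] with n hn
    exact probReal_compl_eq_one_sub (Set.toFinite (E n)).measurableSet
  have hE1 : Tendsto (fun n => (ν n).real (E n)) atTop (nhds 1) := by
    have := (hsame.congr' hEc).const_sub 1
    simpa using this
  have hTE : Tendsto (fun n => (ν n).real (T n ∩ E n)) atTop
      (nhds G) := by
    refine tendsto_of_tendsto_of_tendsto_of_le_of_le' (by have h9 := hmain.sub hsame; rwa [sub_zero] at h9) hmain ?_ ?_
    · filter_upwards [hprob] with n hn
      rw [sub_le_iff_le_add]
      refine le_trans (measureReal_mono ?_) (measureReal_union_le _ _)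
      intro e he
      by_cases h : e ∈ E n
      · exact Or.inl ⟨he, h⟩
      · exact Or.inr h
    · filter_upwards [hprob] with n hn
      exact measureReal_mono Set.inter_subset_left
  have hfin := (hE1.inv₀ one_ne_zero).mul hTE
  rw [inv_one, one_mul] at hfin
  refine hfin.congr' ?_
  filter_upwards [hmodel, hprob, eventually_gt_atTop 0] with n hm hn hn0
  rw [← hν] at hn
  have hb := bridge hm hn
  rw [ev_eq hm, cond_real _ _ _ (bridge_null hm hn _)]
  simp only [expr_eq hn0 (c n) (A n) (Y n) (Y' n)]
  simp only [Measure.real]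
  congr 2
  · rw [hb, hν]
  · rw [← hν, ← hb (T n ∩ E n)]
    rfl

end
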